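/- arXiv:2005.09269 — 2 statements merged into one kernel-verified Lean document; each statement's English description precedes it below -/
import Mathlib

section
/- Let H = {rrr, rby} (the patterns: a monochromatic red triangle, and a rainbow triangle with one edge of each color). Then there exist constants C1, C2 > 0 and an integer n0 such that for all n ≥ n0, C1·n^{2/3}/(log n)^{3/2} ≤ h_2(n, H) ≤ C2·n^{2/3}·√(log n), where log denotes the base-2 logarithm. -/
/-- The three edge colors: red, blue, yellow. -/
inductive Col : Type
  | r | b | y
  deriving DecidableEq

/-- A (symmetric) 3-edge-coloring of the complete graph `K_n` on vertex set `Fin n`. -/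
structure Coloring (n : ℕ) where
  col : Fin n → Fin n → Col
  symm : ∀ i j, col i j = col j i

/-- The pattern (multiset of edge colors) of the triangle on vertices `u, v, w`. -/
def triPattern {n : ℕ} (c : Coloring n) (u v w : Fin n) : Multiset Col :=
  {c.col u v, c.col v w, c.col u w}

/-- The coloring `c` contains the pattern `P`: some triangle has color multiset `P`. -/
def Contains {n : ℕ} (c : Coloring n) (P : Multiset Col) : Prop :=
  ∃ u v w : Fin n, u ≠ v ∧ v ≠ w ∧ u ≠ w ∧ triPattern c u v w = P

/-- The coloring `c` avoids every pattern in the family `H`. -/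
def Avoids {n : ℕ} (c : Coloring n) (H : Set (Multiset Col)) : Prop :=
  ∀ P ∈ H, ¬ Contains c P

/-- A vertex set `S` is two-colored under `c`: the edges inside `S` use at most
two of the three colors, i.e. some color is missing on the edges inside `S`. -/
def TwoColored {n : ℕ} (c : Coloring n) (S : Finset (Fin n)) : Prop :=
  ∃ x : Col, ∀ i ∈ S, ∀ j ∈ S, i ≠ j → c.col i j ≠ x

/-- `h2 c` is the maximum size of a vertex set whose induced edges use at most
two of the three colors. -/
noncomputable def h2 {n : ℕ} (c : Coloring n) : ℕ :=
  sSup {k | ∃ S : Finset (Fin n), TwoColored c S ∧ S.card = k}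

/-- `h2n n H = min { h2 c : c a 3-edge-coloring of K_n avoiding all patterns in H }`. -/
noncomputable def h2n (n : ℕ) (H : Set (Multiset Col)) : ℕ :=
  sInf {m | ∃ c : Coloring n, Avoids c H ∧ h2 c = m}

/-- Pattern abbreviations. -/
def Prrr : Multiset Col := {Col.r, Col.r, Col.r}
def Pbbb : Multiset Col := {Col.b, Col.b, Col.b}
def Pyyy : Multiset Col := {Col.y, Col.y, Col.y}
def Prrb : Multiset Col := {Col.r, Col.r, Col.b}
def Prry : Multiset Col := {Col.r, Col.r, Col.y}
def Pbbr : Multiset Col := {Col.b, Col.b, Col.r}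
def Pbby : Multiset Col := {Col.b, Col.b, Col.y}
def Pyyr : Multiset Col := {Col.y, Col.y, Col.r}
def Pyyb : Multiset Col := {Col.y, Col.y, Col.b}
def Prby : Multiset Col := {Col.r, Col.b, Col.y}

/-!
**Lower bound.** Let `B` be the maximal size of a two-colored set. By Gallai's theorem, in a
coloring without rainbow triangles some color has a disconnected graph. On a component of the red
graph this color is not red, and contracting the components of its graph to representatives maps
the red component homomorphically into the red graph on a two-colored set, that is, into a
triangle-free graph on at most `B` vertices. Removing neighborhoods of size greater than `k`,
which are independent, at most `B / k` times and then coloring greedily, one colors such a graph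
with about `k + B / k` colors. For `k ≈ √B` this makes the red graph `O(√B)`-colorable. Each color
class is a two-colored set, so has at most `B` vertices, and `n = O(B ^ (3 / 2))`.

**Upper bound.** Take many disjoint copies of a triangle-free graph `G` with small independence
number, color `G` red and its complement blue in each copy, and color yellow between copies. A
two-colored set lies in one copy, or meets each copy in at most two vertices, or meets each copy
in an independent set.

To get `G`, mix two random graphs: a coarse one on `w ^ 2` vertices with edge probability
`≈ 1 / w`, blown up by a factor `x ^ 4`, and a fine one on the `w ^ 2 * x ^ 4` vertices of the
blow-up with edge probability `≈ 1 / (w * x ^ 2)`. From each, delete the edges of a maximal family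
of edge-disjoint triangles, and then every edge whose ends have a common neighbor in the other
random graph. If a set of about `x ^ 5 * w` vertices meets many fibers of the blow-up, then some
coarse edge in it survives; if it meets few fibers, then some fine edge in it survives. A union
bound over all such sets works for `x ≈ (log n) ^ (1 / 4)`.
-/

section TriangleFreeColoring

variable {V : Type*} {G : SimpleGraph V}

theorem colorable_succ_of_isIndepSet {s : Set V} {n : ℕ} (hs : G.IsIndepSet s)
    (hG : (G.induce sᶜ).Colorable n) : G.Colorable (n + 1) := by
  classical
  obtain ⟨f⟩ := hG
  have hf : ∀ {u v} (hu : u ∉ s) (hv : v ∉ s), G.Adj u v → f ⟨u, hu⟩ ≠ f ⟨v, hv⟩ :=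
    fun hu hv huv => f.valid (v := ⟨_, hu⟩) (w := ⟨_, hv⟩) huv
  refine ⟨.mk (fun v => if hv : v ∈ s then Fin.last n else (f ⟨v, hv⟩).castSucc) ?_⟩
  intro u v huv
  by_cases hu : u ∈ s <;> by_cases hv : v ∈ s <;>
    simp only [hu, hv, dite_true, dite_false]
  · exact absurd huv (hs hu hv huv.ne)
  · exact (Fin.castSucc_lt_last _).ne'
  · exact (Fin.castSucc_lt_last _).ne
  · exact (Fin.castSucc_injective n).ne (hf hu hv huv)

theorem colorable_of_ncard_neighborSet_lt [Finite V] {v : V} {n : ℕ}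
    (hv : (G.neighborSet v).ncard < n) (hG : (G.induce {v}ᶜ).Colorable n) : G.Colorable n := by
  classical
  obtain ⟨f⟩ := hG
  obtain ⟨c, hc⟩ : ∃ c, ∀ w : ({v}ᶜ : Set V), G.Adj v w → f w ≠ c := by
    by_contra! h
    choose w hvw hw using h
    have hinj : Function.Injective fun c => (w c : V) :=
      fun c d hcd => by rw [← hw c, ← hw d, Subtype.ext hcd]
    have hle : (Set.range fun c => (w c : V)).ncard ≤ (G.neighborSet v).ncard :=
      Set.ncard_le_ncard (Set.range_subset_iff.2 hvw)
    rw [← Set.image_univ, Set.ncard_image_of_injective _ hinj, Set.ncard_univ,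
      Nat.card_eq_fintype_card, Fintype.card_fin] at hle
    exact hv.not_ge hle
  refine ⟨.mk (fun w => if hw : w = v then c else f ⟨w, hw⟩) ?_⟩
  intro a b hab
  by_cases ha : a = v <;> by_cases hb : b = v <;> simp only [ha, hb, dite_true, dite_false]
  · exact absurd (ha.trans hb.symm) hab.ne
  · exact (hc ⟨b, hb⟩ (ha ▸ hab)).symm
  · exact hc ⟨a, ha⟩ (hb ▸ hab.symm)
  · exact f.valid (v := ⟨a, ha⟩) (w := ⟨b, hb⟩) hab

theorem colorable_of_cliqueFree_three [Finite V] (hG : G.CliqueFree 3) {k : ℕ} (hk : 0 < k) :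
    G.Colorable (k + Nat.card V / k) := by
  induction hN : Nat.card V using Nat.strong_induction_on generalizing V with
  | _ N ih =>
  subst hN
  have ih' (s : Set V) (hs : s.Nonempty) :
      (G.induce sᶜ).Colorable (k + (Nat.card V - s.ncard) / k) := by
    have hcard : Nat.card (sᶜ : Set V) = Nat.card V - s.ncard := by
      rw [Nat.card_coe_set_eq, Set.ncard_compl]
    refine ih _ ?_ (hG.comap ⟨(SimpleGraph.Embedding.induce _).toCopy⟩) hcard
    have := (Set.ncard_pos (Set.toFinite s)).2 hs
    have := Set.ncard_le_card s
    omega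
  rcases isEmpty_or_nonempty V with _ | ⟨⟨v⟩⟩
  · exact .of_isEmpty _
  by_cases hd : ∃ v, k ≤ (G.neighborSet v).ncard
  · obtain ⟨v, hv⟩ := hd
    have hne : (G.neighborSet v).Nonempty := Set.nonempty_of_ncard_ne_zero (by omega)
    have hind : G.IsIndepSet (G.neighborSet v) :=
      G.isIndepSet_neighborSet_of_triangleFree hG v
    refine (colorable_succ_of_isIndepSet hind (ih' _ hne)).mono ?_
    have hle : k ≤ Nat.card V := hv.trans (Set.ncard_le_card _)
    rw [Nat.div_eq_sub_div hk hle, ← add_assoc]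
    gcongr
  · push Not at hd
    refine colorable_of_ncard_neighborSet_lt ((hd v).trans_le (Nat.le_add_right _ _)) ?_
    exact (ih' {v} (Set.singleton_nonempty v)).mono
      (Nat.add_le_add_left (Nat.div_le_div_right (Nat.sub_le _ _)) _)

theorem card_le_mul_indepNum_of_colorable [Finite V] {n : ℕ} (hG : G.Colorable n) :
    Nat.card V ≤ n * G.indepNum := by
  classical
  have := Fintype.ofFinite V
  obtain ⟨f⟩ := hG
  rw [Nat.card_eq_fintype_card, mul_comm]
  simpa using Finset.card_le_mul_card_image_of_maps_to (s := Finset.univ) (t := Finset.univ)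
    (f := f) (fun _ _ => Finset.mem_univ _) G.indepNum fun c _ =>
      SimpleGraph.IsIndepSet.card_le_indepNum (fun u hu v hv _ huv => f.valid huv (by simp_all))

end TriangleFreeColoring

section EdgeColorings

variable {V W K : Type*}

/-- The graph of the edges of color `x` in an edge-coloring of the complete graph. A coloring is
encoded as a function on all unordered pairs, whose values on the diagonal play no role. -/
def colorGraph (c : Sym2 V → K) (x : K) : SimpleGraph V :=
  .fromEdgeSet (c ⁻¹' {x})

/-- An edge-coloring in which no triangle has three different colors. Degenerate triples `u v w`
satisfy the condition automatically. -/
def RainbowFree (c : Sym2 V → K) : Prop :=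
  ∀ u v w, c s(u, v) = c s(v, w) ∨ c s(v, w) = c s(u, w) ∨ c s(u, v) = c s(u, w)

variable {c : Sym2 V → K} {x : K}

@[simp]
theorem colorGraph_adj {u v : V} : (colorGraph c x).Adj u v ↔ c s(u, v) = x ∧ u ≠ v := by
  simp [colorGraph]

theorem RainbowFree.comp_map (hc : RainbowFree c) (f : W → V) : RainbowFree (c ∘ Sym2.map f) :=
  fun u v w => hc (f u) (f v) (f w)

theorem colorGraph_comp_map (c : Sym2 V → K) (x : K) (f : W ↪ V) :
    colorGraph (c ∘ Sym2.map f) x = (colorGraph c x).comap f := by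
  ext u v
  simp [f.injective.ne_iff]

theorem colorGraph_comp_map_val (c : Sym2 V → K) (x : K) (s : Set V) :
    colorGraph (c ∘ Sym2.map ((↑) : s → V)) x = (colorGraph c x).induce s :=
  colorGraph_comp_map c x (.subtype (· ∈ s))

theorem RainbowFree.eq_of_reachable (hc : RainbowFree c) {u w w' : V}
    (hu : ¬ (colorGraph c x).Reachable u w) (hw : (colorGraph c x).Reachable w w') :
    c s(u, w) = c s(u, w') := by
  have hne {z : V} (hz : (colorGraph c x).Reachable w z) : c s(u, z) ≠ x := fun h =>
    hu <| (em (u = z)).elim (fun e => e ▸ hz.symm) fun e =>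
      (SimpleGraph.Adj.reachable (colorGraph_adj.2 ⟨h, e⟩)).trans hz.symm
  rw [SimpleGraph.reachable_iff_reflTransGen] at hw
  induction hw with
  | refl => rfl
  | @tail a b hwa hab ih =>
    rw [← SimpleGraph.reachable_iff_reflTransGen] at hwa
    have hx := (colorGraph_adj.1 hab).1
    have := hne hwa
    have := hne (hwa.trans hab.reachable)
    have := hc u a b
    grind

theorem RainbowFree.eq_of_reachable_induce (hc : RainbowFree c) {s : Set V} {u w w' : s}
    (hu : ¬ ((colorGraph c x).induce s).Reachable u w)
    (hw : ((colorGraph c x).induce s).Reachable w w') : c s(u, w) = c s(u, w') := by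
  rw [← colorGraph_comp_map_val] at hu hw
  exact (hc.comp_map Subtype.val).eq_of_reachable hu hw

theorem exists_reachable_induce_compl_adj {G : SimpleGraph V} (hG : G.Preconnected) {v : V}
    (a : ({v}ᶜ : Set V)) : ∃ a', (G.induce {v}ᶜ).Reachable a a' ∧ G.Adj v a' := by
  obtain ⟨p⟩ := hG a v
  obtain ⟨d, -, ⟨b, hab, hbd⟩, hd⟩ := p.exists_boundary_dart
    (Subtype.val '' {b | (G.induce {v}ᶜ).Reachable a b}) ⟨a, .refl a, rfl⟩
    (fun ⟨b, _, hb⟩ => b.2 hb)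
  have hadj : G.Adj b d.snd := hbd ▸ d.adj
  refine ⟨b, hab, ?_⟩
  by_contra hvb
  have hne : d.snd ≠ v := fun h => hvb (h ▸ hadj.symm)
  have hadj' : (G.induce {v}ᶜ).Adj b ⟨d.snd, hne⟩ := hadj
  exact hd ⟨⟨d.snd, hne⟩, hab.trans hadj'.reachable, rfl⟩

theorem RainbowFree.eq_of_not_reachable_induce_compl (hc : RainbowFree c)
    (hx : (colorGraph c x).Preconnected) {v : V} {a b : ({v}ᶜ : Set V)}
    (hab : ¬ ((colorGraph c x).induce {v}ᶜ).Reachable a b) (ha : c s(v, a) ≠ x) :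
    c s(a, b) = c s(v, a) := by
  obtain ⟨b', hbb', hvb'⟩ := exists_reachable_induce_compl_adj hx b
  have hab' : ¬ ((colorGraph c x).induce {v}ᶜ).Reachable a b' := fun h => hab (h.trans hbb'.symm)
  have hne : c s(a, b') ≠ x := fun h => hab' <| SimpleGraph.Adj.reachable
    (colorGraph_adj.2 ⟨h, fun e => hab' (Subtype.ext e ▸ .refl a)⟩)
  have heq : c s(a, b) = c s(a, b') := hc.eq_of_reachable_induce hab hbb'
  have hx' : c s(v, b') = x := (colorGraph_adj.1 hvb').1
  have := hc v a b'
  grind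

/-- The connectivity half of Gallai's theorem on rainbow-triangle-free colorings. -/
theorem RainbowFree.exists_not_preconnected [Finite V] [Nontrivial V] (hc : RainbowFree c)
    (hK : ∀ x : K, ({x}ᶜ : Set K).Nontrivial) : ∃ x, ¬ (colorGraph c x).Preconnected := by
  induction hN : Nat.card V using Nat.strong_induction_on generalizing V with
  | _ N ih =>
  by_contra! hconn
  obtain ⟨v⟩ : Nonempty V := inferInstance
  have hadj (y : K) : ∃ a : ({v}ᶜ : Set V), c s(v, a) = y := by
    obtain ⟨a, ha⟩ := (hconn y).exists_adj_of_nontrivial v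
    exact ⟨⟨a, ha.ne'⟩, (colorGraph_adj.1 ha).1⟩
  obtain ⟨x, hx⟩ : ∃ x, ¬ ((colorGraph c x).induce {v}ᶜ).Preconnected := by
    have hnt : Nontrivial ({v}ᶜ : Set V) := by
      obtain ⟨y, -, z, -, hyz⟩ := hK (c s(v, v))
      obtain ⟨a, ha⟩ := hadj y
      obtain ⟨b, hb⟩ := hadj z
      exact ⟨a, b, fun hab => hyz (by rw [← ha, ← hb, hab])⟩
    have hcard : Nat.card ({v}ᶜ : Set V) < N := hN ▸ Finite.card_subtype_lt (x := v) (by simp)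
    obtain ⟨x, hx⟩ := ih _ hcard (hc.comp_map Subtype.val) rfl
    exact ⟨x, by rwa [colorGraph_comp_map_val] at hx⟩
  obtain ⟨y, hy, z, hz, hyz⟩ := hK x
  obtain ⟨a, rfl⟩ := hadj y
  obtain ⟨b, rfl⟩ := hadj z
  by_cases hab : ((colorGraph c x).induce {v}ᶜ).Reachable a b
  · obtain ⟨d, hd⟩ : ∃ d, ¬ ((colorGraph c x).induce {v}ᶜ).Reachable d a := by
      by_contra! h
      exact hx fun p q => (h p).trans (h q).symm
    have hda := hc.eq_of_not_reachable_induce_compl (hconn x) (fun h => hd h.symm) hy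
    have hdb := hc.eq_of_not_reachable_induce_compl (hconn x)
      (fun h => hd (h.symm.trans hab.symm)) hz
    have heq : c s(d, a) = c s(d, b) := hc.eq_of_reachable_induce hd hab
    exact hyz (by rw [← hda, ← hdb, Sym2.eq_swap, heq, Sym2.eq_swap])
  · have hab' := hc.eq_of_not_reachable_induce_compl (hconn x) hab hy
    have hba := hc.eq_of_not_reachable_induce_compl (hconn x) (fun h => hab h.symm) hz
    exact hyz (by rw [← hab', ← hba, Sym2.eq_swap])

theorem RainbowFree.not_reachable_of_adj (hc : RainbowFree c) {r : K}
    (hr : (colorGraph c r).CliqueFree 3) (hr' : (colorGraph c r).Preconnected)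
    (hx : ¬ (colorGraph c x).Preconnected) {u v : V} (huv : (colorGraph c r).Adj u v) :
    ¬ (colorGraph c x).Reachable u v := by
  intro hreach
  obtain ⟨w, hw⟩ : ∃ w, ¬ (colorGraph c x).Reachable u w := by
    by_contra! h
    exact hx fun p q => (h p).symm.trans (h q)
  obtain ⟨p⟩ := hr' u w
  obtain ⟨d, -, hd, hd'⟩ := p.exists_boundary_dart {z | (colorGraph c x).Reachable u z} (.refl u) hw
  have hadj {z : V} (hz : (colorGraph c x).Reachable u z) : (colorGraph c r).Adj d.snd z := by
    have hnr : ¬ (colorGraph c x).Reachable d.snd d.fst := fun h => hd' (hd.trans h.symm)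
    have heq : c s(d.snd, d.fst) = c s(d.snd, z) := hc.eq_of_reachable hnr (hd.symm.trans hz)
    exact colorGraph_adj.2
      ⟨heq ▸ (colorGraph_adj.1 d.adj.symm).1, fun h => hd' (show _ from h ▸ hz)⟩
  exact SimpleGraph.isIndepSet_neighborSet_of_triangleFree _ hr d.snd
    (hadj (.refl u)) (hadj hreach) huv.ne huv

theorem card_le_indepNum_of_forall_not_adj [Finite V] {G : SimpleGraph V} {f : W → V}
    (hf : Function.Injective f) (hG : ∀ a b, ¬ G.Adj (f a) (f b)) : Nat.card W ≤ G.indepNum := by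
  have := Fintype.ofFinite V
  have := Fintype.ofInjective f hf
  have hind : G.IsIndepSet (Finset.univ.map ⟨f, hf⟩ : Finset V) := by
    intro u hu v hv _
    obtain ⟨a, -, rfl⟩ := Finset.mem_map.1 hu
    obtain ⟨b, -, rfl⟩ := Finset.mem_map.1 hv
    exact hG a b
  rw [Nat.card_eq_fintype_card, ← Finset.card_univ, ← Finset.card_map ⟨f, hf⟩]
  exact hind.card_le_indepNum

theorem indepNum_comap_le [Finite V] (G : SimpleGraph V) (f : W ↪ V) :
    (G.comap f).indepNum ≤ G.indepNum := by
  have := Finite.of_injective f f.injective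
  obtain ⟨t, ht⟩ := (G.comap f).exists_isNIndepSet_indepNum
  rw [← ht.card_eq, ← Nat.card_eq_finsetCard]
  exact card_le_indepNum_of_forall_not_adj (f.injective.comp Subtype.val_injective)
    fun a b hab => ht.isIndepSet a.2 b.2 (SimpleGraph.Adj.ne hab <| congrArg f ·) hab

/-- Contracting the components of a disconnected color class leaves a triangle-free graph on a set
of representatives, which misses that color. -/
theorem RainbowFree.colorable_of_preconnected [Finite V] (hc : RainbowFree c)
    (hK : ∀ x : K, ({x}ᶜ : Set K).Nontrivial) {r : K} (hr : (colorGraph c r).CliqueFree 3)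
    (hr' : (colorGraph c r).Preconnected) {B k : ℕ} (hB : ∀ x, (colorGraph c x).indepNum ≤ B)
    (hk : 0 < k) : (colorGraph c r).Colorable (k + B / k) := by
  rcases subsingleton_or_nontrivial V with _ | _
  · exact (SimpleGraph.colorable_one_iff.2 (Subsingleton.elim _ _)).mono
      (Nat.one_le_iff_ne_zero.2 (by positivity))
  obtain ⟨x, hx⟩ := hc.exists_not_preconnected hK
  set toComp := (colorGraph c x).connectedComponentMk
  let rep : (colorGraph c x).ConnectedComponent → V := Quot.out
  have hrep (u : V) : (colorGraph c x).Reachable u (rep (toComp u)) :=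
    SimpleGraph.ConnectedComponent.exact (Quot.out_eq _).symm
  have hrep' (C) : toComp (rep C) = C := Quot.out_eq C
  have hinj : Function.Injective rep := Function.LeftInverse.injective hrep'
  have hhom {u v : V} (huv : (colorGraph c r).Adj u v) :
      (colorGraph c r).Adj (rep (toComp u)) (rep (toComp v)) := by
    have hnr := hc.not_reachable_of_adj hr hr' hx huv
    have huv' := hc.eq_of_reachable hnr (hrep v)
    have hvu' := hc.eq_of_reachable (fun h => hnr ((hrep v).trans h).symm) (hrep u)
    refine colorGraph_adj.2 ⟨?_, fun h => hnr ((hrep u).trans (h ▸ (hrep v).symm))⟩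
    rw [Sym2.eq_swap, ← hvu', Sym2.eq_swap, ← huv', (colorGraph_adj.1 huv).1]
  have hcard : Nat.card (colorGraph c x).ConnectedComponent ≤ B := by
    refine (card_le_indepNum_of_forall_not_adj hinj fun C D hCD => ?_).trans (hB x)
    refine hCD.ne (congrArg rep ?_)
    rw [← hrep' C, ← hrep' D]
    exact SimpleGraph.ConnectedComponent.sound hCD.reachable
  have hfree : ((colorGraph c r).comap rep).CliqueFree 3 :=
    hr.comap ⟨(SimpleGraph.Embedding.comap ⟨rep, hinj⟩ _).toCopy⟩
  exact ((colorable_of_cliqueFree_three hfree hk).of_hom ⟨toComp, hhom⟩).mono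
    (Nat.add_le_add_left (Nat.div_le_div_right hcard) k)

theorem RainbowFree.colorable [Finite V] (hc : RainbowFree c)
    (hK : ∀ x : K, ({x}ᶜ : Set K).Nontrivial) {r : K} (hr : (colorGraph c r).CliqueFree 3)
    {B k : ℕ} (hB : ∀ x, (colorGraph c x).indepNum ≤ B) (hk : 0 < k) :
    (colorGraph c r).Colorable (k + B / k) := by
  rw [SimpleGraph.colorable_iff_forall_connectedComponent]
  intro C
  have hC : colorGraph (c ∘ Sym2.map ((↑) : C.supp → V)) r = C.toSimpleGraph :=
    colorGraph_comp_map_val c r C.supp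
  rw [← hC]
  refine (hc.comp_map _).colorable_of_preconnected hK ?_ ?_ (fun x => ?_) hk
  · exact hC ▸ hr.comap ⟨(SimpleGraph.Embedding.induce C.supp).toCopy⟩
  · exact hC ▸ C.connected_toSimpleGraph.preconnected
  · rw [colorGraph_comp_map_val]
    exact (indepNum_comap_le _ _).trans (hB x)

theorem RainbowFree.card_le [Finite V] (hc : RainbowFree c)
    (hK : ∀ x : K, ({x}ᶜ : Set K).Nontrivial) {r : K} (hr : (colorGraph c r).CliqueFree 3)
    {B k : ℕ} (hB : ∀ x, (colorGraph c x).indepNum ≤ B) (hk : 0 < k) :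
    Nat.card V ≤ (k + B / k) * B :=
  (card_le_mul_indepNum_of_colorable (hc.colorable hK hr hB hk)).trans
    (Nat.mul_le_mul_left _ (hB r))

end EdgeColorings

section TwoColoredSets

variable {n : ℕ}

/-- The coloring `c` as a function on unordered pairs, which is how `colorGraph` and `RainbowFree`
take their argument. -/
def Coloring.onSym2 (c : Coloring n) : Sym2 (Fin n) → Col :=
  Sym2.lift ⟨c.col, c.symm⟩

@[simp]
theorem Coloring.onSym2_mk (c : Coloring n) (u v : Fin n) : c.onSym2 s(u, v) = c.col u v :=
  rfl

theorem Col.nontrivial_compl_singleton (x : Col) : ({x}ᶜ : Set Col).Nontrivial := by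
  cases x
  · exact ⟨.b, by simp, .y, by simp, by simp⟩
  · exact ⟨.r, by simp, .y, by simp, by simp⟩
  · exact ⟨.r, by simp, .b, by simp, by simp⟩

theorem twoColored_iff {c : Coloring n} {S : Finset (Fin n)} :
    TwoColored c S ↔ ∃ x, (colorGraph c.onSym2 x).IsIndepSet S := by
  refine exists_congr fun x => forall₂_congr fun i _ => forall₂_congr fun j _ => ?_
  simp only [colorGraph_adj, Coloring.onSym2_mk]
  tauto

theorem cliqueFree_three_iff {V : Type*} {G : SimpleGraph V} :
    G.CliqueFree 3 ↔ ∀ u v w, G.Adj u v → G.Adj v w → ¬ G.Adj u w := by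
  classical
  constructor
  · intro hG u v w huv hvw huw
    exact hG _ (SimpleGraph.is3Clique_triple_iff.2 ⟨huv, huw, hvw⟩)
  · intro hG s hs
    obtain ⟨u, v, w, huv, huw, hvw, -⟩ := SimpleGraph.is3Clique_iff.1 hs
    exact hG u v w huv hvw huw

theorem avoids_iff {c : Coloring n} :
    Avoids c {Prrr, Prby} ↔ (colorGraph c.onSym2 .r).CliqueFree 3 ∧ RainbowFree c.onSym2 := by
  have hrrr {p q s : Col} : ({p, q, s} : Multiset Col) = Prrr ↔ p = .r ∧ q = .r ∧ s = .r := by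
    cases p <;> cases q <;> cases s <;> decide
  have hrby {p q s : Col} : ({p, q, s} : Multiset Col) = Prby ↔ ¬ (p = q ∨ q = s ∨ p = s) := by
    cases p <;> cases q <;> cases s <;> decide
  simp only [Avoids, Contains, triPattern, Set.mem_insert_iff, Set.mem_singleton_iff,
    forall_eq_or_imp, forall_eq, hrrr, hrby, cliqueFree_three_iff, RainbowFree, colorGraph_adj,
    Coloring.onSym2_mk, not_exists, not_and, not_not]
  refine and_congr (by grind) (forall₃_congr fun u v w => ⟨fun h => ?_, fun h _ _ _ => h⟩)
  grind [c.symm u v, c.symm v w]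

theorem h2_le_iff {c : Coloring n} {B : ℕ} :
    h2 c ≤ B ↔ ∀ x, (colorGraph c.onSym2 x).indepNum ≤ B := by
  have hbdd : BddAbove {k | ∃ S : Finset (Fin n), TwoColored c S ∧ S.card = k} :=
    ⟨_, fun _ ⟨S, _, hS⟩ => hS ▸ S.card_le_univ⟩
  have hne : {k | ∃ S : Finset (Fin n), TwoColored c S ∧ S.card = k}.Nonempty :=
    ⟨_, ∅, ⟨.r, by simp⟩, rfl⟩
  rw [h2, csSup_le_iff hbdd hne]
  constructor
  · intro h x
    obtain ⟨S, hS⟩ := (colorGraph c.onSym2 x).exists_isNIndepSet_indepNum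
    exact h _ ⟨S, twoColored_iff.2 ⟨x, hS.isIndepSet⟩, hS.card_eq⟩
  · rintro h _ ⟨S, hS, rfl⟩
    obtain ⟨x, hx⟩ := twoColored_iff.1 hS
    exact hx.card_le_indepNum.trans (h x)

theorem exists_h2_eq_h2n (n : ℕ) : ∃ c : Coloring n, Avoids c {Prrr, Prby} ∧
    h2 c = h2n n {Prrr, Prby} := by
  refine Nat.sInf_mem (s := {m | ∃ c : Coloring n, Avoids c {Prrr, Prby} ∧ h2 c = m})
    ⟨_, ⟨fun _ _ => .b, fun _ _ => rfl⟩, avoids_iff.2 ⟨?_, fun _ _ _ => .inl rfl⟩, rfl⟩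
  simp [cliqueFree_three_iff]

theorem h2n_le_of_avoids {c : Coloring n} {H : Set (Multiset Col)} (hc : Avoids c H) :
    h2n n H ≤ h2 c :=
  Nat.sInf_le ⟨c, hc, rfl⟩

theorem le_mul_h2n (n : ℕ) {k : ℕ} (hk : 0 < k) :
    n ≤ (k + h2n n {Prrr, Prby} / k) * h2n n {Prrr, Prby} := by
  obtain ⟨c, hc, h⟩ := exists_h2_eq_h2n n
  obtain ⟨hr, hrb⟩ := avoids_iff.1 hc
  rw [← h]
  simpa only [Nat.card_fin] using
    hrb.card_le Col.nontrivial_compl_singleton hr (h2_le_iff.1 le_rfl) hk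

theorem sq_le_mul_h2n_pow (n : ℕ) : n ^ 2 ≤ 9 * h2n n {Prrr, Prby} ^ 3 := by
  set B := h2n n {Prrr, Prby}
  have h : n ≤ (B.sqrt + 1 + B / (B.sqrt + 1)) * B := le_mul_h2n n B.sqrt.succ_pos
  rcases B.eq_zero_or_pos with hB | hB
  · simp_all
  have hdiv : B / (B.sqrt + 1) ≤ B.sqrt :=
    Nat.lt_succ_iff.1 ((Nat.div_lt_iff_lt_mul B.sqrt.succ_pos).2 B.lt_succ_sqrt)
  have hsqrt : 1 ≤ B.sqrt := Nat.sqrt_pos.2 hB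
  calc n ^ 2 ≤ (3 * B.sqrt * B) ^ 2 :=
        Nat.pow_le_pow_left (h.trans (Nat.mul_le_mul_right _ (by omega))) 2
    _ = 9 * B ^ 2 * B.sqrt ^ 2 := by ring
    _ ≤ 9 * B ^ 2 * B := Nat.mul_le_mul_left _ B.sqrt_le'
    _ = 9 * B ^ 3 := by ring

theorem rpow_two_thirds_le_h2n (n : ℕ) :
    1 / 9 * (n : ℝ) ^ (2 / 3 : ℝ) ≤ h2n n {Prrr, Prby} := by
  set B := h2n n {Prrr, Prby}
  have h : (n : ℝ) ^ 2 ≤ 9 * (B : ℝ) ^ 3 := mod_cast sq_le_mul_h2n_pow n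
  have hB : (0 : ℝ) ≤ (B : ℝ) ^ 3 := by positivity
  have hn : ((n : ℝ) ^ (2 / 3 : ℝ)) ^ 3 = (n : ℝ) ^ 2 := by
    rw [← Real.rpow_mul_natCast n.cast_nonneg, ← Real.rpow_natCast]
    norm_num
  have : (n : ℝ) ^ (2 / 3 : ℝ) ≤ 9 * B :=
    le_of_pow_le_pow_left₀ three_ne_zero (by positivity) (by rw [hn]; linarith)
  linarith

end TwoColoredSets

section UniformProbability

open scoped BigOperators

variable {Ω Ω' ι α : Type*} [Fintype Ω] [Fintype Ω']

open Classical in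
/-- The probability of an event under the uniform distribution on a finite type, as a real number.
All random objects below are uniform, so measures are not needed. -/
noncomputable def unifProb (P : Ω → Prop) : ℝ :=
  𝔼 ω, if P ω then 1 else 0

theorem expect_prod_type (f : Ω × Ω' → ℝ) : 𝔼 ω, f ω = 𝔼 a, 𝔼 b, f (a, b) := by
  rw [← Finset.univ_product_univ, Finset.expect_product]

theorem expect_pi_prod [Fintype ι] [DecidableEq ι] [Fintype α] (g : ι → α → ℝ) :
    𝔼 X : ι → α, ∏ i, g i (X i) = ∏ i, 𝔼 a, g i a := by
  simp only [Fintype.expect_eq_sum_div_card]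
  rw [Finset.prod_div_distrib, Finset.prod_univ_sum]
  simp

theorem unifProb_le_expect {P : Ω → Prop} {f : Ω → ℝ} (h₀ : ∀ ω, 0 ≤ f ω)
    (h₁ : ∀ ω, P ω → 1 ≤ f ω) : unifProb P ≤ 𝔼 ω, f ω := by
  refine Finset.expect_le_expect fun ω _ => ?_
  split_ifs with h
  exacts [h₁ ω h, h₀ ω]

theorem unifProb_mono {P Q : Ω → Prop} (h : ∀ ω, P ω → Q ω) : unifProb P ≤ unifProb Q :=
  unifProb_le_expect (fun ω => by split_ifs <;> norm_num) fun ω hω => by rw [if_pos (h ω hω)]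

theorem unifProb_le_one [Nonempty Ω] (P : Ω → Prop) : unifProb P ≤ 1 :=
  (unifProb_le_expect (fun _ => zero_le_one) fun _ _ => le_rfl).trans_eq (Fintype.expect_const 1)

theorem unifProb_false : unifProb (fun _ : Ω => False) = 0 := by
  simp [unifProb]

theorem exists_not_of_unifProb_lt_one [Nonempty Ω] {P : Ω → Prop} (h : unifProb P < 1) :
    ∃ ω, ¬ P ω := by
  by_contra! hP
  simp [unifProb, hP] at h

theorem unifProb_exists_mem_le_sum (s : Finset ι) (P : ι → Ω → Prop) :
    unifProb (fun ω => ∃ i ∈ s, P i ω) ≤ ∑ i ∈ s, unifProb (P i) := by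
  classical
  simp only [unifProb]
  rw [← Finset.expect_sum_comm]
  refine unifProb_le_expect (fun ω => Finset.sum_nonneg fun i _ => by split_ifs <;> norm_num) ?_
  rintro ω ⟨i, hi, hω⟩
  calc (1 : ℝ) = if P i ω then 1 else 0 := (if_pos hω).symm
    _ ≤ ∑ i ∈ s, if P i ω then 1 else 0 :=
      Finset.single_le_sum (f := fun i => if P i ω then (1 : ℝ) else 0)
        (fun i _ => by split_ifs <;> norm_num) hi

theorem unifProb_exists_mem_le {s : Finset ι} {P : ι → Ω → Prop} {p : ℝ}
    (h : ∀ i ∈ s, unifProb (P i) ≤ p) : unifProb (fun ω => ∃ i ∈ s, P i ω) ≤ s.card * p :=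
  (unifProb_exists_mem_le_sum s P).trans <| (Finset.sum_le_card_nsmul s _ p h).trans_eq <|
    nsmul_eq_mul _ _

theorem unifProb_or_le (P Q : Ω → Prop) :
    unifProb (fun ω => P ω ∨ Q ω) ≤ unifProb P + unifProb Q := by
  simpa [or_comm] using unifProb_exists_mem_le_sum Finset.univ fun i : Bool => if i then P else Q

theorem unifProb_comp_equiv (e : Ω ≃ Ω') (P : Ω' → Prop) :
    unifProb (fun ω => P (e ω)) = unifProb P :=
  Fintype.expect_equiv e _ _ fun _ => rfl

theorem unifProb_prod_type (P : Ω × Ω' → Prop) :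
    unifProb P = 𝔼 a, unifProb fun b => P (a, b) :=
  expect_prod_type _

theorem unifProb_fst [Nonempty Ω'] (P : Ω → Prop) :
    unifProb (fun ω : Ω × Ω' => P ω.1) = unifProb P := by
  rw [unifProb_prod_type]
  exact Finset.expect_congr rfl fun a _ => by by_cases h : P a <;> simp [unifProb, h]

theorem unifProb_snd [Nonempty Ω] (P : Ω' → Prop) :
    unifProb (fun ω : Ω × Ω' => P ω.2) = unifProb P :=
  (unifProb_comp_equiv (Equiv.prodComm Ω Ω') fun ω => P ω.1).trans (unifProb_fst P)

theorem unifProb_le_add_of_forall_fst [Nonempty Ω] [Nonempty Ω'] {P : Ω × Ω' → Prop}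
    {A : Ω → Prop} {p : ℝ} (hp : 0 ≤ p) (h : ∀ a, ¬ A a → unifProb (fun b => P (a, b)) ≤ p) :
    unifProb P ≤ unifProb A + p := by
  classical
  calc unifProb P = 𝔼 a, unifProb fun b => P (a, b) := unifProb_prod_type P
    _ ≤ 𝔼 a, ((if A a then 1 else 0) + p) := Finset.expect_le_expect fun a _ => ?_
    _ = unifProb A + p := by
      rw [Finset.expect_add_distrib, Fintype.expect_const, unifProb]
  by_cases ha : A a
  · rw [if_pos ha]
    linarith [unifProb_le_one fun b => P (a, b)]
  · rw [if_neg ha, zero_add]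
    exact h a ha

theorem unifProb_lt_le_exp_mul_expect_exp (f : Ω → ℝ) (a : ℝ) :
    unifProb (fun ω => a < f ω) ≤ Real.exp (-a) * 𝔼 ω, Real.exp (f ω) := by
  rw [Finset.mul_expect]
  refine unifProb_le_expect (fun ω => by positivity) fun ω hω => ?_
  rw [← Real.exp_add]
  exact Real.one_le_exp (by linarith)

theorem unifProb_forall [Fintype ι] [DecidableEq ι] [Fintype α] (P : ι → α → Prop) :
    unifProb (fun X : ι → α => ∀ i, P i (X i)) = ∏ i, unifProb (P i) := by
  classical
  simp only [unifProb]
  rw [← expect_pi_prod]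
  exact Finset.expect_congr rfl fun X _ => by simp [Finset.prod_boole]

variable {m : ℕ} [NeZero m]

theorem expect_fin_ite_eq_zero (x y : ℝ) :
    𝔼 a : Fin m, (if a = 0 then x else y) = x * (1 / m) + y * (1 - 1 / m) := by
  have hm : (m : ℝ) ≠ 0 := NeZero.ne _
  have hsplit (a : Fin m) : (if a = 0 then x else y) = y + if a = 0 then x - y else 0 := by
    split_ifs <;> ring
  simp only [hsplit, Fintype.expect_eq_sum_div_card, Finset.sum_add_distrib, Finset.sum_const,
    Finset.card_univ, Fintype.card_fin, nsmul_eq_mul, Finset.sum_ite_eq', Finset.mem_univ, if_true]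
  field_simp
  ring

theorem unifProb_zero_on_and_ne_zero_on [Fintype ι] [DecidableEq ι] {A B : Finset ι}
    (h : Disjoint A B) :
    unifProb (fun X : ι → Fin m => (∀ i ∈ A, X i = 0) ∧ ∀ i ∈ B, X i ≠ 0) =
      (1 / m : ℝ) ^ A.card * (1 - 1 / m : ℝ) ^ B.card := by
  have hcoord (i : ι) : unifProb (fun a : Fin m => (i ∈ A → a = 0) ∧ (i ∈ B → a ≠ 0)) =
      (if i ∈ A then (1 / m : ℝ) else 1) * if i ∈ B then (1 - 1 / m : ℝ) else 1 := by
    have h1 := expect_fin_ite_eq_zero (m := m) 0 1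
    by_cases hA : i ∈ A
    · simp [unifProb, hA, Finset.disjoint_left.1 h hA]
    · by_cases hB : i ∈ B
      · simpa [unifProb, hA, hB, ite_not] using h1
      · simp [unifProb, hA, hB]
  simp only [← forall_and]
  rw [unifProb_forall fun i a => (i ∈ A → a = 0) ∧ (i ∈ B → a ≠ 0)]
  simp only [hcoord, Finset.prod_mul_distrib, Finset.prod_ite_mem, Finset.univ_inter,
    Finset.prod_const]

end UniformProbability

section Alteration

variable {V : Type*} [LinearOrder V] {m : ℕ} [NeZero m]

/-- The random graph on a linear order `V` given by independent uniform labels `X` on `V × V`: a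
pair is an edge when its increasing ordering has label `0`, so the edge density is `1 / m`. The
labels of the other pairs are not used; they make the rows of `X` independent of each other. -/
def zeroGraph (X : V × V → Fin m) : SimpleGraph V where
  Adj a b := a ≠ b ∧ X (min a b, max a b) = 0
  symm := ⟨fun a b h => ⟨h.1.symm, by rw [min_comm, max_comm]; exact h.2⟩⟩
  loopless := ⟨fun _ h => h.1 rfl⟩

/-- The increasing pairs contained in an increasing triple. -/
def triangleEdges (t : V × V × V) : Finset (V × V) :=
  {(t.1, t.2.1), (t.2.1, t.2.2), (t.1, t.2.2)}

/-- A set of pairwise edge-disjoint triangles of `zeroGraph X`, each given as an increasing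
triple. -/
structure IsTrianglePacking (X : V × V → Fin m) (F : Finset (V × V × V)) : Prop where
  increasing : ∀ t ∈ F, t.1 < t.2.1 ∧ t.2.1 < t.2.2
  eq_zero : ∀ t ∈ F, ∀ e ∈ triangleEdges t, X e = 0
  pairwiseDisjoint : (F : Set (V × V × V)).PairwiseDisjoint triangleEdges

theorem zeroGraph_adj_of_lt {X : V × V → Fin m} {a b : V} (h : a < b) :
    (zeroGraph X).Adj a b ↔ X (a, b) = 0 := by
  simp [zeroGraph, h.ne, min_eq_left h.le, max_eq_right h.le]

theorem card_triangleEdges {t : V × V × V} (h₁ : t.1 < t.2.1) (h₂ : t.2.1 < t.2.2) :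
    (triangleEdges t).card = 3 :=
  Finset.card_eq_three.2 ⟨_, _, _, fun h => h₁.ne (congrArg Prod.fst h),
    fun h => h₂.ne (congrArg Prod.snd h), fun h => h₁.ne' (congrArg Prod.fst h), rfl⟩

theorem cliqueFree_three_of_forall_lt {G : SimpleGraph V}
    (h : ∀ a b c, a < b → b < c → G.Adj a b → G.Adj b c → ¬ G.Adj a c) : G.CliqueFree 3 := by
  refine cliqueFree_three_iff.2 fun u v w huv hvw huw => ?_
  rcases huv.ne.lt_or_gt with h₁ | h₁ <;> rcases hvw.ne.lt_or_gt with h₂ | h₂ <;>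
    rcases huw.ne.lt_or_gt with h₃ | h₃
  · exact h u v w h₁ h₂ huv hvw huw
  · exact absurd (h₁.trans h₂) h₃.not_gt
  · exact h u w v h₃ h₂ huw hvw.symm huv
  · exact h w u v h₃ h₁ huw.symm huv hvw.symm
  · exact h v u w h₁ h₃ huv.symm huw hvw
  · exact h v w u h₂ h₃ hvw huw.symm huv.symm
  · exact absurd (h₂.trans h₁) h₃.not_gt
  · exact h w v u h₂ h₁ hvw.symm huv.symm huw.symm

theorem exists_maximal_isTrianglePacking [Finite V] (X : V × V → Fin m) :
    ∃ F, Maximal (IsTrianglePacking X) F :=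
  (Set.toFinite {F | IsTrianglePacking X F}).exists_maximal ⟨∅, by simp, by simp, by simp⟩

variable [Fintype V]

/-- A chosen maximal triangle packing of `zeroGraph X`. -/
noncomputable def maximalTrianglePacking (X : V × V → Fin m) : Finset (V × V × V) :=
  (exists_maximal_isTrianglePacking X).choose

theorem maximal_maximalTrianglePacking (X : V × V → Fin m) :
    Maximal (IsTrianglePacking X) (maximalTrianglePacking X) :=
  (exists_maximal_isTrianglePacking X).choose_spec

/-- The graph left from `zeroGraph X` after deleting all edges of a maximal triangle packing. -/
noncomputable def prunedGraph (X : V × V → Fin m) : SimpleGraph V where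
  Adj a b := (zeroGraph X).Adj a b ∧
    (min a b, max a b) ∉ (maximalTrianglePacking X).biUnion triangleEdges
  symm := ⟨fun a b h => ⟨h.1.symm, by rw [min_comm, max_comm]; exact h.2⟩⟩
  loopless := ⟨fun _ h => h.1.ne rfl⟩

theorem prunedGraph_le (X : V × V → Fin m) : prunedGraph X ≤ zeroGraph X :=
  fun _ _ h => h.1

theorem prunedGraph_adj_of_lt {X : V × V → Fin m} {a b : V} (h : a < b) :
    (prunedGraph X).Adj a b ↔
      X (a, b) = 0 ∧ (a, b) ∉ (maximalTrianglePacking X).biUnion triangleEdges := by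
  rw [← zeroGraph_adj_of_lt h]
  simp [prunedGraph, min_eq_left h.le, max_eq_right h.le]

theorem prunedGraph_cliqueFree_three (X : V × V → Fin m) : (prunedGraph X).CliqueFree 3 := by
  refine cliqueFree_three_of_forall_lt fun a b c hab hbc h₁ h₂ h₃ => ?_
  rw [prunedGraph_adj_of_lt hab] at h₁
  rw [prunedGraph_adj_of_lt hbc] at h₂
  rw [prunedGraph_adj_of_lt (hab.trans hbc)] at h₃
  have hF := maximal_maximalTrianglePacking X
  have hnotMem : ∀ e ∈ triangleEdges (a, b, c),
      e ∉ (maximalTrianglePacking X).biUnion triangleEdges := by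
    simp only [triangleEdges, Finset.forall_mem_insert, Finset.mem_singleton, forall_eq]
    exact ⟨h₁.2, h₂.2, h₃.2⟩
  have hinsert : IsTrianglePacking X (insert (a, b, c) (maximalTrianglePacking X)) := by
    refine ⟨?_, ?_, ?_⟩
    · exact Finset.forall_mem_insert _ _ _ |>.2 ⟨⟨hab, hbc⟩, hF.prop.increasing⟩
    · refine Finset.forall_mem_insert _ _ _ |>.2 ⟨?_, hF.prop.eq_zero⟩
      simpa [triangleEdges] using ⟨h₁.1, h₂.1, h₃.1⟩
    · rw [Finset.coe_insert]
      exact hF.prop.pairwiseDisjoint.insert fun t ht _ => Finset.disjoint_left.2 fun e he het =>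
        hnotMem e he (Finset.mem_biUnion.2 ⟨t, ht, het⟩)
  have hmem := hF.le_of_ge hinsert (Finset.subset_insert _ _) (Finset.mem_insert_self _ _)
  have hedge : (a, b) ∈ triangleEdges (a, b, c) := Finset.mem_insert_self _ _
  exact hnotMem _ hedge (Finset.mem_biUnion.2 ⟨_, hmem, hedge⟩)

/-- The increasing triples with an edge in `Q`. -/
def trianglesMeeting (Q : Finset (V × V)) : Finset (V × V × V) :=
  {t | (t.1 < t.2.1 ∧ t.2.1 < t.2.2) ∧ ¬ Disjoint (triangleEdges t) Q}

theorem card_trianglesMeeting_le (Q : Finset (V × V)) :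
    (trianglesMeeting Q).card ≤ 3 * (Q.card * Fintype.card V) := by
  let P : Finset ((V × V) × V) := Q ×ˢ Finset.univ
  let f : Fin 3 → (V × V) × V → V × V × V :=
    ![fun x => (x.1.1, x.1.2, x.2), fun x => (x.2, x.1.1, x.1.2), fun x => (x.1.1, x.2, x.1.2)]
  have hsub : trianglesMeeting Q ⊆ Finset.univ.biUnion fun i => P.image (f i) := by
    rintro ⟨a, b, c⟩ ht
    obtain ⟨e, he, heQ⟩ := Finset.not_disjoint_iff.1 (Finset.mem_filter.1 ht).2.2
    simp only [triangleEdges, Finset.mem_insert, Finset.mem_singleton] at he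
    simp only [Finset.mem_biUnion, Finset.mem_image, Finset.mem_univ, true_and]
    rcases he with rfl | rfl | rfl
    · exact ⟨0, ((a, b), c), by simp [P, heQ], rfl⟩
    · exact ⟨1, ((b, c), a), by simp [P, heQ], rfl⟩
    · exact ⟨2, ((a, c), b), by simp [P, heQ], rfl⟩
  calc (trianglesMeeting Q).card ≤ _ := Finset.card_le_card hsub
    _ ≤ (Finset.univ : Finset (Fin 3)).card * P.card :=
      Finset.card_biUnion_le_card_mul _ _ _ fun _ _ => Finset.card_image_le
    _ = 3 * (Q.card * Fintype.card V) := by simp [P]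

theorem exists_packing_of_forall_not_adj {X : V × V → Fin m} {Q : Finset (V × V)}
    (hQ : ∀ e ∈ Q, e.1 < e.2) (h : ∀ e ∈ Q, ¬ (prunedGraph X).Adj e.1 e.2) :
    ∃ F ⊆ trianglesMeeting Q, (F : Set (V × V × V)).PairwiseDisjoint triangleEdges ∧
      (∀ e ∈ F.biUnion triangleEdges, X e = 0) ∧
      ∀ e ∈ Q \ F.biUnion triangleEdges, X e ≠ 0 := by
  have hF := (maximal_maximalTrianglePacking X).prop
  refine ⟨(maximalTrianglePacking X).filter fun t => ¬ Disjoint (triangleEdges t) Q,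
    ?_, ?_, ?_, ?_⟩
  · intro t ht
    rw [Finset.mem_filter] at ht
    exact Finset.mem_filter.2 ⟨Finset.mem_univ _, hF.increasing t ht.1, ht.2⟩
  · exact hF.pairwiseDisjoint.subset (Finset.coe_subset.2 (Finset.filter_subset _ _))
  · intro e he
    obtain ⟨t, ht, het⟩ := Finset.mem_biUnion.1 he
    exact hF.eq_zero t (Finset.mem_filter.1 ht).1 e het
  · intro e he hXe
    obtain ⟨heQ, heF⟩ := Finset.mem_sdiff.1 he
    have hpacked : e ∈ (maximalTrianglePacking X).biUnion triangleEdges := by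
      by_contra hmem
      exact h e heQ ((prunedGraph_adj_of_lt (hQ e heQ)).2 ⟨hXe, hmem⟩)
    obtain ⟨t, ht, het⟩ := Finset.mem_biUnion.1 hpacked
    exact heF (Finset.mem_biUnion.2 ⟨t, Finset.mem_filter.2
      ⟨ht, fun hd => Finset.disjoint_left.1 hd het heQ⟩, het⟩)

theorem unifProb_packing_le {Q : Finset (V × V)} {F : Finset (V × V × V)} (hm : 2 ≤ m)
    (hF : F ⊆ trianglesMeeting Q)
    (hd : (F : Set (V × V × V)).PairwiseDisjoint triangleEdges) :
    unifProb (fun X : V × V → Fin m => (∀ e ∈ F.biUnion triangleEdges, X e = 0) ∧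
        ∀ e ∈ Q \ F.biUnion triangleEdges, X e ≠ 0) ≤
      (1 - 1 / m : ℝ) ^ Q.card * ((1 / m / (1 - 1 / m) : ℝ) ^ 3) ^ F.card := by
  have hm' : (2 : ℝ) ≤ m := by exact_mod_cast hm
  have hp : (1 / m : ℝ) ≤ 1 / 2 := by gcongr
  set p : ℝ := 1 / m
  have hp₀ : 0 ≤ p := by positivity
  have hq : 0 < 1 - p := by linarith
  have hcard : (F.biUnion triangleEdges).card = 3 * F.card := by
    rw [Finset.card_biUnion hd, Finset.sum_const_nat (m := 3), mul_comm]
    intro t ht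
    have := (Finset.mem_filter.1 (hF ht)).2.1
    exact card_triangleEdges this.1 this.2
  have hcard' : Q.card ≤ 3 * F.card + (Q \ F.biUnion triangleEdges).card := by
    have := Finset.le_card_sdiff (F.biUnion triangleEdges) Q
    omega
  rw [unifProb_zero_on_and_ne_zero_on Finset.disjoint_sdiff, hcard]
  calc p ^ (3 * F.card) * (1 - p) ^ (Q \ F.biUnion triangleEdges).card
      = (1 - p) ^ (3 * F.card + (Q \ F.biUnion triangleEdges).card) *
          ((p / (1 - p)) ^ 3) ^ F.card := by
        rw [← pow_mul, pow_add, mul_right_comm, ← mul_pow, mul_div_cancel₀ _ hq.ne']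
    _ ≤ (1 - p) ^ Q.card * ((p / (1 - p)) ^ 3) ^ F.card := by
        gcongr ?_ * _
        exact pow_le_pow_of_le_one hq.le (by linarith) hcard'

/-- The union bound over the packed triangles that meet `Q`: every pair in `Q` outside them has a
nonzero label. -/
theorem unifProb_forall_not_adj_le_pow {Q : Finset (V × V)} (hQ : ∀ e ∈ Q, e.1 < e.2)
    (hm : 2 ≤ m) :
    unifProb (fun X : V × V → Fin m => ∀ e ∈ Q, ¬ (prunedGraph X).Adj e.1 e.2) ≤
      (1 - 1 / m : ℝ) ^ Q.card *
        ((1 / m / (1 - 1 / m) : ℝ) ^ 3 + 1) ^ (trianglesMeeting Q).card := by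
  classical
  have hm' : (1 : ℝ) ≤ m := by exact_mod_cast one_le_two.trans hm
  have hq : 0 ≤ 1 - 1 / (m : ℝ) := by
    rw [sub_nonneg]
    exact div_le_one_of_le₀ hm' (by positivity)
  have hterm (F : Finset (V × V × V)) (hF : F ∈ (trianglesMeeting Q).powerset) :
      unifProb (fun X : V × V → Fin m => (F : Set (V × V × V)).PairwiseDisjoint triangleEdges ∧
        (∀ e ∈ F.biUnion triangleEdges, X e = 0) ∧
        ∀ e ∈ Q \ F.biUnion triangleEdges, X e ≠ 0) ≤
      (1 - 1 / m : ℝ) ^ Q.card * (((1 / m / (1 - 1 / m) : ℝ) ^ 3) ^ F.card *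
        1 ^ ((trianglesMeeting Q).card - F.card)) := by
    rw [one_pow, mul_one]
    by_cases hd : (F : Set (V × V × V)).PairwiseDisjoint triangleEdges
    · exact (unifProb_mono fun X h => h.2).trans
        (unifProb_packing_le hm (Finset.mem_powerset.1 hF) hd)
    · simp only [hd, false_and, unifProb_false]
      positivity
  rw [← Finset.sum_pow_mul_eq_add_pow, Finset.mul_sum]
  refine (unifProb_mono fun X hX => ?_).trans <|
    (unifProb_exists_mem_le_sum (trianglesMeeting Q).powerset _).trans (Finset.sum_le_sum hterm)
  obtain ⟨F, hF, h⟩ := exists_packing_of_forall_not_adj hQ hX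
  exact ⟨F, Finset.mem_powerset.2 hF, h⟩

theorem unifProb_forall_not_adj_le_exp {Q : Finset (V × V)} (hQ : ∀ e ∈ Q, e.1 < e.2)
    (hm : 2 ≤ m) (hV : 48 * Fintype.card V ≤ m ^ 2) :
    unifProb (fun X : V × V → Fin m => ∀ e ∈ Q, ¬ (prunedGraph X).Adj e.1 e.2) ≤
      Real.exp (-(Q.card / (2 * m))) := by
  refine (unifProb_forall_not_adj_le_pow hQ hm).trans ?_
  have hm' : (2 : ℝ) ≤ m := by exact_mod_cast hm
  have hp : (1 / m : ℝ) ≤ 1 / 2 := by gcongr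
  set p : ℝ := 1 / m with hp_def
  have hp₀ : 0 ≤ p := by positivity
  have hq : 0 < 1 - p := by linarith
  have hc : (p / (1 - p)) ^ 3 ≤ 8 * p ^ 3 := by
    have : p / (1 - p) ≤ 2 * p := by
      rw [div_le_iff₀ hq]
      nlinarith
    calc (p / (1 - p)) ^ 3 ≤ (2 * p) ^ 3 := by gcongr
      _ = 8 * p ^ 3 := by ring
  have hT : ((trianglesMeeting Q).card : ℝ) ≤ 3 * (Q.card * Fintype.card V) := by
    exact_mod_cast card_trianglesMeeting_le Q
  have hpV : 48 * (p ^ 2 * Fintype.card V) ≤ 1 := by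
    have : 48 * (Fintype.card V : ℝ) ≤ m ^ 2 := by exact_mod_cast hV
    rw [hp_def, div_pow, one_pow, one_div_mul_eq_div, mul_div_assoc']
    exact div_le_one_of_le₀ this (by positivity)
  have hexponent : (p / (1 - p)) ^ 3 * (trianglesMeeting Q).card ≤ p * Q.card / 2 :=
    calc (p / (1 - p)) ^ 3 * (trianglesMeeting Q).card
        ≤ 8 * p ^ 3 * (3 * (Q.card * Fintype.card V)) := by gcongr
      _ = 48 * (p ^ 2 * Fintype.card V) * (p * Q.card / 2) := by ring
      _ ≤ 1 * (p * Q.card / 2) := by gcongr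
      _ = p * Q.card / 2 := one_mul _
  calc (1 - p) ^ Q.card * ((p / (1 - p)) ^ 3 + 1) ^ (trianglesMeeting Q).card
      ≤ Real.exp (-p) ^ Q.card *
          Real.exp ((p / (1 - p)) ^ 3) ^ (trianglesMeeting Q).card := by
        gcongr
        exacts [Real.one_sub_le_exp_neg p, Real.add_one_le_exp _]
    _ = Real.exp (-(p * Q.card) + (p / (1 - p)) ^ 3 * (trianglesMeeting Q).card) := by
        rw [← Real.exp_nat_mul, ← Real.exp_nat_mul, ← Real.exp_add]
        ring_nf
    _ ≤ Real.exp (-(p * Q.card / 2)) := by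
        gcongr
        linarith
    _ = Real.exp (-(Q.card / (2 * m))) := by
        rw [hp_def]
        congr 2
        field_simp

end Alteration

section SparseNeighborhoods

variable {ι κ V : Type*} {m : ℕ} [NeZero m]

theorem unifProb_le_card_filter_forall_eq_zero_le [Fintype κ] [DecidableEq κ] {s : Finset ι}
    {A : ι → Finset κ} {k : ℕ} (hA : (s : Set ι).PairwiseDisjoint A)
    (hk : ∀ i ∈ s, (A i).card = k) (D : ℕ) :
    unifProb (fun X : κ → Fin m => D ≤ (s.filter fun i => ∀ e ∈ A i, X e = 0).card) ≤
      (1 / 2) ^ D * Real.exp ((1 / m) ^ k * s.card) := by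
  have hterm (B : Finset ι) (hB : B ∈ s.powerset) :
      unifProb (fun X : κ → Fin m => ∀ i ∈ B, ∀ e ∈ A i, X e = 0) =
        ((1 / m : ℝ) ^ k) ^ B.card * 1 ^ (s.card - B.card) := by
    have hBs := Finset.mem_powerset.1 hB
    have hcard : (B.biUnion A).card = k * B.card := by
      rw [Finset.card_biUnion (hA.subset (Finset.coe_subset.2 hBs)),
        Finset.sum_const_nat fun i hi => hk i (hBs hi), mul_comm]
    have := unifProb_zero_on_and_ne_zero_on (m := m) (Finset.disjoint_empty_right (B.biUnion A))
    rw [one_pow, mul_one, ← pow_mul, ← hcard]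
    simpa [forall_comm (α := κ)] using this
  have hcount (X : κ → Fin m) (hX : D ≤ (s.filter fun i => ∀ e ∈ A i, X e = 0).card) :
      1 ≤ (1 / 2 : ℝ) ^ D *
        ∑ B ∈ s.powerset, if ∀ i ∈ B, ∀ e ∈ A i, X e = 0 then 1 else 0 := by
    have hfilter : (s.powerset.filter fun B => ∀ i ∈ B, ∀ e ∈ A i, X e = 0) =
        (s.filter fun i => ∀ e ∈ A i, X e = 0).powerset := by
      ext B
      simp only [Finset.mem_filter, Finset.mem_powerset, Finset.subset_iff]
      grind
    rw [Finset.sum_boole, hfilter, Finset.card_powerset, Nat.cast_pow, Nat.cast_two]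
    calc (1 : ℝ) = (1 / 2) ^ D * 2 ^ D := by rw [← mul_pow]; norm_num
      _ ≤ _ := by gcongr; norm_num
  refine (unifProb_le_expect (fun X => ?_) hcount).trans ?_
  · exact mul_nonneg (by positivity) (Finset.sum_nonneg fun _ _ => by split_ifs <;> norm_num)
  rw [← Finset.mul_expect, Finset.expect_sum_comm]
  gcongr
  calc _ = ∑ B ∈ s.powerset, ((1 / m : ℝ) ^ k) ^ B.card * 1 ^ (s.card - B.card) :=
        Finset.sum_congr rfl fun B hB => by rw [← hterm B hB, unifProb]; congr!
    _ = ((1 / m : ℝ) ^ k + 1) ^ s.card := Finset.sum_pow_mul_eq_add_pow _ _ _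
    _ ≤ Real.exp ((1 / m) ^ k) ^ s.card := by gcongr; exact Real.add_one_le_exp _
    _ = Real.exp ((1 / m) ^ k * s.card) := by rw [← Real.exp_nat_mul, mul_comm]

/-- All degrees of `G` are at most `Δ`, and any two distinct vertices have at most `D` common
neighbors. -/
structure HasSparseNeighborhoods [Fintype V] [DecidableEq V] (G : SimpleGraph V)
    [DecidableRel G.Adj] (Δ D : ℕ) : Prop where
  degree_le : ∀ z, G.degree z ≤ Δ
  codegree_le : ∀ z z', z ≠ z' → (G.neighborFinset z ∩ G.neighborFinset z').card ≤ D

variable [LinearOrder V]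

instance (X : V × V → Fin m) : DecidableRel (zeroGraph X).Adj :=
  fun a b => inferInstanceAs (Decidable (a ≠ b ∧ X (min a b, max a b) = 0))

theorem zeroGraph_adj {X : V × V → Fin m} {a b : V} :
    (zeroGraph X).Adj a b ↔ a ≠ b ∧ X (min a b, max a b) = 0 :=
  Iff.rfl

theorem min_max_eq_min_max_iff {a b c d : V} :
    (min a b, max a b) = (min c d, max c d) ↔ s(a, b) = s(c, d) := by
  rw [← Sym2.inf_eq_inf_and_sup_eq_sup, Prod.mk.injEq]
  rfl

variable [Fintype V]

theorem unifProb_lt_degree_zeroGraph_le (z : V) (Δ : ℕ) :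
    unifProb (fun X : V × V → Fin m => Δ < (zeroGraph X).degree z) ≤
      (1 / 2) ^ Δ * Real.exp (1 / m * Fintype.card V) := by
  let s : Finset V := Finset.univ.erase z
  let A : V → Finset (V × V) := fun b => {(min z b, max z b)}
  have hA : (s : Set V).PairwiseDisjoint A := fun b _ b' _ hne =>
    Finset.disjoint_singleton.2 fun h => hne (Sym2.congr_right.1 (min_max_eq_min_max_iff.1 h))
  have hs : (s.card : ℝ) ≤ Fintype.card V := by exact_mod_cast s.card_le_univ
  have hsub (X : V × V → Fin m) :
      (zeroGraph X).neighborFinset z ⊆ s.filter fun b => ∀ e ∈ A b, X e = 0 := by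
    intro b hb
    rw [SimpleGraph.mem_neighborFinset, zeroGraph_adj] at hb
    simpa [s, A, hb.1.symm] using hb.2
  calc _ ≤ unifProb (fun X : V × V → Fin m =>
          Δ ≤ (s.filter fun b => ∀ e ∈ A b, X e = 0).card) :=
        unifProb_mono fun X hX => hX.le.trans (Finset.card_le_card (hsub X))
    _ ≤ (1 / 2) ^ Δ * Real.exp ((1 / m) ^ 1 * s.card) :=
        unifProb_le_card_filter_forall_eq_zero_le hA (fun b _ => Finset.card_singleton _) Δ
    _ ≤ (1 / 2) ^ Δ * Real.exp (1 / m * Fintype.card V) := by rw [pow_one]; gcongr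

theorem unifProb_lt_codegree_zeroGraph_le {z z' : V} (hz : z ≠ z') (D : ℕ) :
    unifProb (fun X : V × V → Fin m =>
        D < ((zeroGraph X).neighborFinset z ∩ (zeroGraph X).neighborFinset z').card) ≤
      (1 / 2) ^ D * Real.exp ((1 / m) ^ 2 * Fintype.card V) := by
  let s : Finset V := (Finset.univ.erase z).erase z'
  let A : V → Finset (V × V) := fun b => {(min z b, max z b), (min z' b, max z' b)}
  have hs_mem {b : V} (hb : b ∈ s) : b ≠ z ∧ b ≠ z' := by simpa [s, and_comm] using hb
  have hA : (s : Set V).PairwiseDisjoint A := by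
    intro b hb b' hb' hne
    have := hs_mem hb
    have := hs_mem hb'
    simp only [Function.onFun, A, Finset.disjoint_insert_right, Finset.disjoint_singleton_right,
      Finset.mem_insert, Finset.mem_singleton, min_max_eq_min_max_iff, Sym2.eq, Sym2.rel_iff',
      Prod.swap_prod_mk]
    grind
  have hcard (b : V) (_ : b ∈ s) : (A b).card = 2 :=
    Finset.card_pair fun h => hz (Sym2.congr_left.1 (min_max_eq_min_max_iff.1 h))
  have hs : (s.card : ℝ) ≤ Fintype.card V := by exact_mod_cast s.card_le_univ
  have hsub (X : V × V → Fin m) : (zeroGraph X).neighborFinset z ∩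
      (zeroGraph X).neighborFinset z' ⊆ s.filter fun b => ∀ e ∈ A b, X e = 0 := by
    intro b hb
    simp only [Finset.mem_inter, SimpleGraph.mem_neighborFinset, zeroGraph_adj] at hb
    simpa [s, A, hb.1.1.symm, hb.2.1.symm] using ⟨hb.1.2, hb.2.2⟩
  calc _ ≤ unifProb (fun X : V × V → Fin m =>
          D ≤ (s.filter fun b => ∀ e ∈ A b, X e = 0).card) :=
        unifProb_mono fun X hX => hX.le.trans (Finset.card_le_card (hsub X))
    _ ≤ (1 / 2) ^ D * Real.exp ((1 / m) ^ 2 * s.card) :=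
        unifProb_le_card_filter_forall_eq_zero_le hA hcard D
    _ ≤ (1 / 2) ^ D * Real.exp ((1 / m) ^ 2 * Fintype.card V) := by gcongr

theorem unifProb_not_hasSparseNeighborhoods_le (Δ D : ℕ) :
    unifProb (fun X : V × V → Fin m => ¬ HasSparseNeighborhoods (zeroGraph X) Δ D) ≤
      Fintype.card V * ((1 / 2) ^ Δ * Real.exp (1 / m * Fintype.card V)) +
        Fintype.card V ^ 2 * ((1 / 2) ^ D * Real.exp ((1 / m) ^ 2 * Fintype.card V)) := by
  let pairs : Finset (V × V) := Finset.univ.filter fun x => x.1 ≠ x.2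
  have hpairs : (pairs.card : ℝ) ≤ (Fintype.card V : ℝ) ^ 2 := by
    have := pairs.card_le_univ
    rw [Fintype.card_prod, ← sq] at this
    exact_mod_cast this
  have hdeg := unifProb_exists_mem_le fun (z : V) (_ : z ∈ Finset.univ) =>
    unifProb_lt_degree_zeroGraph_le (m := m) z Δ
  have hcodeg := unifProb_exists_mem_le fun x (hx : x ∈ pairs) =>
    unifProb_lt_codegree_zeroGraph_le (m := m) (Finset.mem_filter.1 hx).2 D
  refine (unifProb_mono fun X hX => ?_).trans <| (unifProb_or_le _ _).trans <|
    add_le_add hdeg (hcodeg.trans (by gcongr))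
  contrapose! hX
  exact ⟨fun z => hX.1 z (Finset.mem_univ z),
    fun z z' hz => hX.2 (z, z') (by simpa [pairs] using hz)⟩

end SparseNeighborhoods

section ZeroWeight

open scoped BigOperators

variable {ι κ : Type*} [Fintype ι] [Fintype κ] {m : ℕ} [NeZero m]

/-- The total weight of the coordinates at which `Z` vanishes. -/
def zeroWeight (ω : ι → ℝ) (Z : ι → Fin m) : ℝ :=
  ∑ b, if Z b = 0 then ω b else 0

theorem zeroWeight_nonneg {ω : ι → ℝ} (hω : ∀ b, 0 ≤ ω b) (Z : ι → Fin m) :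
    0 ≤ zeroWeight ω Z :=
  Finset.sum_nonneg fun b _ => by split_ifs <;> simp [hω]

theorem sq_mul_exp_le {t : ℝ} (ht : 0 ≤ t) : t ^ 2 * Real.exp t ≤ Real.exp (2 * t) - 1 - 2 * t := by
  have hcubic : 1 + t + t ^ 2 / 2 + t ^ 3 / 6 ≤ Real.exp t := by
    have := Real.sum_le_exp_of_nonneg ht 4
    simpa [Finset.sum_range_succ, Nat.factorial] using this
  have hsq : Real.exp (2 * t) = Real.exp t ^ 2 := by rw [← Real.exp_nat_mul]; norm_num
  set q := 1 + t + t ^ 2 / 2 + t ^ 3 / 6 with hq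
  have hqt : 0 ≤ q - t ^ 2 := by
    have : 0 ≤ t * ((t - 3 / 2) ^ 2 + 15 / 4) := by positivity
    linarith
  have hpoly : 1 + 2 * t ≤ q * (q - t ^ 2) := by
    have : 0 ≤ t ^ 2 + t ^ 3 / 3 + t ^ 4 / 12 + t ^ 6 / 36 := by positivity
    rw [hq]
    linarith
  have hmul : q * (q - t ^ 2) ≤ Real.exp t * (Real.exp t - t ^ 2) := by gcongr
  rw [hsq]
  linarith

theorem exp_le_one_add_add_sq {x : ℝ} (h₀ : 0 ≤ x) (h₁ : x ≤ 1) :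
    Real.exp x ≤ 1 + x + x ^ 2 := by
  have := (abs_le.1 (Real.abs_exp_sub_one_sub_id_le (abs_le.2 ⟨by linarith, h₁⟩))).2
  linarith

variable {ω : ι → ℝ} {R : ℝ}

theorem expect_zeroWeight [DecidableEq ι] (ω : ι → ℝ) :
    𝔼 Z : ι → Fin m, zeroWeight ω Z = 1 / m * ∑ b, ω b := by
  simp only [zeroWeight, Finset.expect_sum_comm, Finset.mul_sum]
  refine Finset.sum_congr rfl fun b _ => ?_
  have hfactor (Z : ι → Fin m) : (if Z b = 0 then ω b else 0) =
      ∏ i, if i = b then (if Z i = 0 then ω b else 0) else 1 := by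
    simp
  simp only [hfactor]
  rw [expect_pi_prod fun i (a : Fin m) => if i = b then (if a = 0 then ω b else 0) else 1]
  rw [Finset.prod_eq_single b (fun i _ hi => by simp [hi]) (by simp)]
  simp only [if_true, expect_fin_ite_eq_zero]
  ring

theorem expect_exp_mul_zeroWeight_le [DecidableEq ι] (hω : ∀ b, 0 ≤ ω b) (hR : ∀ b, ω b ≤ R)
    {l : ℝ} (hl : 0 ≤ l) (hlR : l * R ≤ 1) :
    𝔼 Z : ι → Fin m, Real.exp (l * zeroWeight ω Z) ≤
      Real.exp (1 / m * (l * (1 + l * R) * ∑ b, ω b)) := by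
  have hfactor (Z : ι → Fin m) : Real.exp (l * zeroWeight ω Z) =
      ∏ b, if Z b = 0 then Real.exp (l * ω b) else 1 := by
    rw [zeroWeight, Finset.mul_sum, Real.exp_sum]
    exact Finset.prod_congr rfl fun b _ => by split_ifs <;> simp
  simp only [hfactor]
  rw [expect_pi_prod fun b (a : Fin m) => if a = 0 then Real.exp (l * ω b) else 1]
  simp only [expect_fin_ite_eq_zero, Finset.mul_sum, Real.exp_sum]
  refine Finset.prod_le_prod (fun b _ => ?_) fun b _ => ?_
  · have hm : (1 / m : ℝ) ≤ 1 := div_le_one_of_le₀ (mod_cast NeZero.one_le) (Nat.cast_nonneg _)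
    have := sub_nonneg.2 hm
    positivity
  have hlω : 0 ≤ l * ω b := mul_nonneg hl (hω b)
  have hlωR : l * ω b ≤ l * R := mul_le_mul_of_nonneg_left (hR b) hl
  calc Real.exp (l * ω b) * (1 / m) + 1 * (1 - 1 / m)
      = 1 / m * (Real.exp (l * ω b) - 1) + 1 := by ring
    _ ≤ 1 / m * (l * (1 + l * R) * ω b) + 1 := by
        gcongr
        nlinarith [exp_le_one_add_add_sq hlω (hlωR.trans hlR)]
    _ ≤ Real.exp (1 / m * (l * (1 + l * R) * ω b)) := Real.add_one_le_exp _

theorem expect_sq_zeroWeight_mul_exp_le [DecidableEq ι] (hω : ∀ b, 0 ≤ ω b) (hR : ∀ b, ω b ≤ R)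
    (hR₀ : 0 ≤ R) {d : ℝ} (hd : 0 < d) (hdR : d * R ≤ 1 / 8) (hdω : 1 / m * d * ∑ b, ω b ≤ 1 / 8) :
    𝔼 Z : ι → Fin m, zeroWeight ω Z ^ 2 * Real.exp (d * zeroWeight ω Z) ≤
      8 * ((1 / m * ∑ b, ω b) ^ 2 + 1 / m * R * ∑ b, ω b) := by
  have hμ₀ : 0 ≤ 1 / m * ∑ b, ω b := mul_nonneg (by positivity) (Finset.sum_nonneg fun b _ => hω b)
  set μ := 1 / m * ∑ b, ω b with hμ
  have hpointwise (Z : ι → Fin m) : zeroWeight ω Z ^ 2 * Real.exp (d * zeroWeight ω Z) ≤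
      1 / d ^ 2 * (Real.exp (2 * d * zeroWeight ω Z) - 1 - 2 * d * zeroWeight ω Z) := by
    have := sq_mul_exp_le (mul_nonneg hd.le (zeroWeight_nonneg hω Z))
    rw [one_div_mul_eq_div, le_div_iff₀ (by positivity)]
    rw [mul_assoc 2 d]
    linear_combination this
  have hmgf := expect_exp_mul_zeroWeight_le (m := m) hω hR (l := 2 * d) (by linarith) (by linarith)
  have hexponent : 1 / m * (2 * d * (1 + 2 * d * R) * ∑ b, ω b) = 2 * d * (1 + 2 * d * R) * μ := by
    rw [hμ]; ring
  set u := 2 * d * (1 + 2 * d * R) * μ with hu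
  have hdμ : d * μ ≤ 1 / 8 := by rw [hμ]; linarith
  have hdR₀ : 0 ≤ d * R := by positivity
  have hdμ₀ : 0 ≤ d * μ := by positivity
  have hu₀ : 0 ≤ u := by positivity
  have hu_le : u ≤ 5 / 2 * (d * μ) := by nlinarith
  have hexp : Real.exp u ≤ 1 + u + u ^ 2 := exp_le_one_add_add_sq hu₀ (by linarith)
  have hu_sq : u ^ 2 ≤ 8 * (d * μ) ^ 2 := by nlinarith
  rw [hexponent] at hmgf
  calc _ ≤ 𝔼 Z : ι → Fin m,
        1 / d ^ 2 * (Real.exp (2 * d * zeroWeight ω Z) - 1 - 2 * d * zeroWeight ω Z) :=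
        Finset.expect_le_expect fun Z _ => hpointwise Z
    _ = 1 / d ^ 2 * ((𝔼 Z : ι → Fin m, Real.exp (2 * d * zeroWeight ω Z)) - 1 - 2 * d * μ) := by
        rw [← Finset.mul_expect, Finset.expect_sub_distrib, Finset.expect_sub_distrib,
          Fintype.expect_const, ← Finset.mul_expect, expect_zeroWeight]
    _ ≤ 1 / d ^ 2 * (d ^ 2 * (8 * (μ ^ 2 + R * μ))) := by
        gcongr
        nlinarith
    _ = 8 * (μ ^ 2 + 1 / m * R * ∑ b, ω b) := by
        rw [hμ]; field_simp

theorem expect_exp_mul_sq_min_zeroWeight_le [DecidableEq ι] (hω : ∀ b, 0 ≤ ω b)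
    (hR : ∀ b, ω b ≤ R) (hR₀ : 0 ≤ R) {θ J : ℝ} (hθ : 0 < θ) (hJ : 0 < J)
    (hθR : θ * J * R ≤ 1 / 8) (hθω : 1 / m * (θ * J) * ∑ b, ω b ≤ 1 / 8) :
    𝔼 Z : ι → Fin m, Real.exp (θ * min (zeroWeight ω Z) J ^ 2) ≤
      Real.exp (θ * (8 * ((1 / m * ∑ b, ω b) ^ 2 + 1 / m * R * ∑ b, ω b))) := by
  have hpointwise (Z : ι → Fin m) : Real.exp (θ * min (zeroWeight ω Z) J ^ 2) ≤
      1 + θ * (zeroWeight ω Z ^ 2 * Real.exp (θ * J * zeroWeight ω Z)) := by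
    have hY := zeroWeight_nonneg hω Z
    set Y := zeroWeight ω Z
    have hmin : 0 ≤ min Y J := le_min hY hJ.le
    set s := θ * min Y J ^ 2
    have hs : Real.exp s ≤ 1 + s * Real.exp s := by
      have := mul_le_mul_of_nonneg_right (Real.one_sub_le_exp_neg s) (Real.exp_nonneg s)
      rw [← Real.exp_add, neg_add_cancel, Real.exp_zero] at this
      linarith
    have hsY : s ≤ θ * Y ^ 2 :=
      mul_le_mul_of_nonneg_left (pow_le_pow_left₀ hmin (min_le_left _ _) 2) hθ.le
    have hsJ : s ≤ θ * J * Y :=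
      calc s = θ * (min Y J * min Y J) := by rw [← sq]
        _ ≤ θ * (J * Y) := by gcongr; exacts [min_le_right _ _, min_le_left _ _]
        _ = θ * J * Y := by ring
    calc Real.exp s ≤ 1 + s * Real.exp s := hs
      _ ≤ 1 + θ * Y ^ 2 * Real.exp (θ * J * Y) := by
          gcongr 1 + ?_
          exact mul_le_mul hsY (Real.exp_le_exp.2 hsJ) (Real.exp_nonneg s) (by positivity)
      _ = 1 + θ * (Y ^ 2 * Real.exp (θ * J * Y)) := by ring
  have hsecond := expect_sq_zeroWeight_mul_exp_le hω hR hR₀ (mul_pos hθ hJ) hθR hθω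
  calc _ ≤ 𝔼 Z : ι → Fin m,
        (1 + θ * (zeroWeight ω Z ^ 2 * Real.exp (θ * J * zeroWeight ω Z))) :=
        Finset.expect_le_expect fun Z _ => hpointwise Z
    _ = θ * (𝔼 Z : ι → Fin m,
        zeroWeight ω Z ^ 2 * Real.exp (θ * J * zeroWeight ω Z)) + 1 := by
        rw [Finset.expect_add_distrib, Fintype.expect_const, ← Finset.mul_expect, add_comm]
    _ ≤ θ * (8 * ((1 / m * ∑ b, ω b) ^ 2 + 1 / m * R * ∑ b, ω b)) + 1 := by gcongr
    _ ≤ _ := Real.add_one_le_exp _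

theorem unifProb_lt_sum_sq_min_zeroWeight_le [DecidableEq ι] [DecidableEq κ] (hω : ∀ b, 0 ≤ ω b)
    (hR : ∀ b, ω b ≤ R) (hR₀ : 0 ≤ R) {θ J : ℝ} (hθ : 0 < θ) (hJ : 0 < J)
    (hθR : θ * J * R ≤ 1 / 8) (hθω : 1 / m * (θ * J) * ∑ b, ω b ≤ 1 / 8) (a : ℝ) :
    unifProb (fun W : κ → ι → Fin m => a < θ * ∑ z, min (zeroWeight ω (W z)) J ^ 2) ≤
      Real.exp (-a + Fintype.card κ *
        (θ * (8 * ((1 / m * ∑ b, ω b) ^ 2 + 1 / m * R * ∑ b, ω b)))) := by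
  refine (unifProb_lt_le_exp_mul_expect_exp _ a).trans ?_
  have hfactor (W : κ → ι → Fin m) : Real.exp (θ * ∑ z, min (zeroWeight ω (W z)) J ^ 2) =
      ∏ z, Real.exp (θ * min (zeroWeight ω (W z)) J ^ 2) := by
    rw [Finset.mul_sum, Real.exp_sum]
  simp only [hfactor]
  rw [expect_pi_prod fun (_ : κ) (Z : ι → Fin m) => Real.exp (θ * min (zeroWeight ω Z) J ^ 2),
    Finset.prod_const, Finset.card_univ, Real.exp_add, Real.exp_nat_mul]
  gcongr
  exact expect_exp_mul_sq_min_zeroWeight_le hω hR hR₀ hθ hJ hθR hθω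

end ZeroWeight

section NeighborWeight

variable {V : Type*} [Fintype V]

/-- The total weight of the neighbors of `z` in `G`. -/
def neighborWeight (G : SimpleGraph V) [DecidableRel G.Adj] (ω : V → ℝ) (z : V) : ℝ :=
  ∑ b ∈ G.neighborFinset z, ω b

variable {G : SimpleGraph V} [DecidableRel G.Adj] {ω : V → ℝ} {R : ℝ}

theorem neighborWeight_nonneg (hω : ∀ b, 0 ≤ ω b) (z : V) : 0 ≤ neighborWeight G ω z :=
  Finset.sum_nonneg fun b _ => hω b

theorem sum_neighborWeight [DecidableEq V] (ω : V → ℝ) (H : Finset V) :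
    ∑ z ∈ H, neighborWeight G ω z = ∑ b, ω b * (H ∩ G.neighborFinset b).card := by
  simp only [neighborWeight, mul_comm (ω _), ← nsmul_eq_mul, ← Finset.sum_const]
  refine Finset.sum_comm' fun z b => ?_
  simp [SimpleGraph.adj_comm]

variable {Δ D : ℕ}

theorem HasSparseNeighborhoods.sum_mul_sq_card_inter_le [DecidableEq V]
    (hG : HasSparseNeighborhoods G Δ D) (hR : ∀ b, ω b ≤ R) (hR₀ : 0 ≤ R) (H : Finset V) :
    ∑ b, ω b * ((H ∩ G.neighborFinset b).card : ℝ) ^ 2 ≤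
      ∑ z ∈ H, neighborWeight G ω z + H.card ^ 2 * (R * D) := by
  have hswap : ∑ b, ω b * ((H ∩ G.neighborFinset b).card : ℝ) ^ 2 =
      ∑ z ∈ H, ∑ z' ∈ H, ∑ b ∈ G.neighborFinset z ∩ G.neighborFinset z', ω b := by
    have hsq (b : V) : ω b * ((H ∩ G.neighborFinset b).card : ℝ) ^ 2 =
        ∑ _x ∈ (H ∩ G.neighborFinset b) ×ˢ (H ∩ G.neighborFinset b), ω b := by
      rw [Finset.sum_const, Finset.card_product, nsmul_eq_mul, Nat.cast_mul]
      ring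
    simp only [hsq, ← Finset.sum_product']
    refine Finset.sum_comm' fun b z => ?_
    simp only [Finset.mem_univ, Finset.mem_product, Finset.mem_inter,
      SimpleGraph.mem_neighborFinset, G.adj_comm b]
    tauto
  have hpair (z z' : V) : ∑ b ∈ G.neighborFinset z ∩ G.neighborFinset z', ω b ≤
      (if z = z' then neighborWeight G ω z else 0) + R * D := by
    split_ifs with hz
    · rw [← hz, Finset.inter_self, neighborWeight, le_add_iff_nonneg_right]
      positivity
    · calc _ ≤ (G.neighborFinset z ∩ G.neighborFinset z').card • R :=
            Finset.sum_le_card_nsmul _ _ _ fun b _ => hR b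
        _ ≤ D * R := by rw [nsmul_eq_mul]; gcongr; exact hG.codegree_le z z' hz
        _ = 0 + R * D := by ring
  calc _ = _ := hswap
    _ ≤ ∑ z ∈ H, ∑ z' ∈ H, ((if z = z' then neighborWeight G ω z else 0) + R * D) := by
        gcongr with z _ z' _; exact hpair z z'
    _ = ∑ z ∈ H, (neighborWeight G ω z + H.card * (R * D)) :=
        Finset.sum_congr rfl fun z hz => by
          rw [Finset.sum_add_distrib, Finset.sum_ite_eq, if_pos hz, Finset.sum_const, nsmul_eq_mul]
    _ = _ := by rw [Finset.sum_add_distrib, Finset.sum_const, nsmul_eq_mul]; ring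

theorem HasSparseNeighborhoods.sum_neighborWeight_le [DecidableEq V]
    (hG : HasSparseNeighborhoods G Δ D) (hω : ∀ b, 0 ≤ ω b) (hR : ∀ b, ω b ≤ R) (hR₀ : 0 ≤ R)
    {J : ℝ} (hJ : 0 ≤ J) (hJD : 2 * (∑ b, ω b) * R * D ≤ J ^ 2) {H : Finset V}
    (hH : ∀ z ∈ H, J ≤ neighborWeight G ω z) :
    ∑ z ∈ H, neighborWeight G ω z ≤ 2 * ∑ b, ω b := by
  have hτ : 0 ≤ ∑ b, ω b := Finset.sum_nonneg fun b _ => hω b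
  have hT₀ : 0 ≤ ∑ z ∈ H, neighborWeight G ω z :=
    Finset.sum_nonneg fun z _ => neighborWeight_nonneg hω z
  have hcauchy : (∑ z ∈ H, neighborWeight G ω z) ^ 2 ≤
      (∑ b, ω b) * ∑ b, ω b * ((H ∩ G.neighborFinset b).card : ℝ) ^ 2 := by
    rw [sum_neighborWeight]
    exact Finset.sum_sq_le_sum_mul_sum_of_sq_le_mul _ (fun b _ => hω b)
      (fun b _ => mul_nonneg (hω b) (sq_nonneg _)) fun b _ => by ring_nf; rfl
  have hsecond := hG.sum_mul_sq_card_inter_le hR hR₀ H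
  have hcard : H.card * J ≤ ∑ z ∈ H, neighborWeight G ω z := by
    rw [← nsmul_eq_mul]
    exact Finset.card_nsmul_le_sum _ _ _ hH
  set τ := ∑ b, ω b
  set T := ∑ z ∈ H, neighborWeight G ω z
  have hupper : T ^ 2 ≤ τ * (T + H.card ^ 2 * (R * D)) :=
    hcauchy.trans (mul_le_mul_of_nonneg_left hsecond hτ)
  have hlower : 2 * (τ * (H.card ^ 2 * (R * D))) ≤ T ^ 2 :=
    calc 2 * (τ * (H.card ^ 2 * (R * D))) = H.card ^ 2 * (2 * τ * R * D) := by ring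
      _ ≤ (H.card * J) ^ 2 := by rw [mul_pow]; gcongr
      _ ≤ T ^ 2 := by gcongr
  by_contra! hT
  nlinarith

theorem HasSparseNeighborhoods.neighborWeight_le [DecidableEq V]
    (hG : HasSparseNeighborhoods G Δ D) (hR : ∀ b, ω b ≤ R) (hR₀ : 0 ≤ R) (z : V) :
    neighborWeight G ω z ≤ R * Δ :=
  calc neighborWeight G ω z ≤ (G.neighborFinset z).card • R :=
        Finset.sum_le_card_nsmul _ _ _ fun b _ => hR b
    _ ≤ R * Δ := by
        rw [nsmul_eq_mul, mul_comm, SimpleGraph.card_neighborFinset_eq_degree]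
        gcongr
        exact hG.degree_le z

theorem HasSparseNeighborhoods.sum_sq_neighborWeight_le [DecidableEq V]
    (hG : HasSparseNeighborhoods G Δ D) (hω : ∀ b, 0 ≤ ω b) (hR : ∀ b, ω b ≤ R) (hR₀ : 0 ≤ R)
    {J : ℝ} (hJ : 0 ≤ J) (hJD : 2 * (∑ b, ω b) * R * D ≤ J ^ 2) {H : Finset V}
    (hH : ∀ z ∈ H, J ≤ neighborWeight G ω z) :
    ∑ z ∈ H, neighborWeight G ω z ^ 2 ≤ R * Δ * (2 * ∑ b, ω b) :=
  calc ∑ z ∈ H, neighborWeight G ω z ^ 2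
      ≤ ∑ z ∈ H, R * Δ * neighborWeight G ω z := by
        gcongr with z
        rw [sq]
        exact mul_le_mul_of_nonneg_right (hG.neighborWeight_le hR hR₀ z)
          (neighborWeight_nonneg hω z)
    _ ≤ R * Δ * (2 * ∑ b, ω b) := by
        rw [← Finset.mul_sum]
        gcongr
        exact hG.sum_neighborWeight_le hω hR hR₀ hJ hJD hH

theorem HasSparseNeighborhoods.sum_sq_neighborWeight_le_of_le_add [DecidableEq V]
    (hG : HasSparseNeighborhoods G Δ D) (hω : ∀ b, 0 ≤ ω b) (hR : ∀ b, ω b ≤ R) (hR₀ : 0 ≤ R)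
    {J : ℝ} (hJ : 0 ≤ J) (hJD : 2 * (∑ b, ω b) * R * D ≤ J ^ 2) {f g : V → ℝ}
    (hf : ∀ z, 0 ≤ f z) (hg : ∀ z, 0 ≤ g z) (hfg : ∀ z, neighborWeight G ω z ≤ f z + g z) :
    ∑ z, neighborWeight G ω z ^ 2 ≤
      2 * (∑ z, min (f z) J ^ 2 + ∑ z, min (g z) J ^ 2) + R * Δ * (2 * ∑ b, ω b) := by
  have hlight (z : V) (hz : ¬ J ≤ neighborWeight G ω z) :
      neighborWeight G ω z ^ 2 ≤ 2 * (min (f z) J ^ 2 + min (g z) J ^ 2) := by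
    have hsplit : neighborWeight G ω z ≤ min (f z) J + min (g z) J := by
      have := hf z; have := hg z; have := hfg z
      grind
    calc _ ≤ (min (f z) J + min (g z) J) ^ 2 :=
          pow_le_pow_left₀ (neighborWeight_nonneg hω z) hsplit 2
      _ ≤ _ := add_sq_le
  rw [← Finset.sum_filter_not_add_sum_filter Finset.univ fun z => J ≤ neighborWeight G ω z]
  refine add_le_add ?_ (hG.sum_sq_neighborWeight_le hω hR hR₀ hJ hJD (by simp))
  rw [← Finset.sum_add_distrib, Finset.mul_sum]
  refine (Finset.sum_le_sum fun z hz => hlight z (Finset.mem_filter.1 hz).2).trans ?_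
  exact Finset.sum_le_sum_of_subset_of_nonneg (Finset.filter_subset _ _) fun z _ _ => by positivity

variable {m : ℕ} [NeZero m]

theorem neighborWeight_zeroGraph_le [LinearOrder V] (hω : ∀ b, 0 ≤ ω b) (X : V × V → Fin m)
    (z : V) :
    neighborWeight (zeroGraph X) ω z ≤
      zeroWeight ω (fun b => X (z, b)) + zeroWeight ω fun b => X (b, z) := by
  simp only [neighborWeight, zeroWeight, ← Finset.sum_add_distrib]
  rw [SimpleGraph.neighborFinset_eq_filter, Finset.sum_filter]
  gcongr with b
  have := hω b
  simp only [zeroGraph_adj]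
  rcases le_total z b with h | h <;> grind

theorem unifProb_lt_sum_sq_min_zeroWeight_le_exp_neg [DecidableEq V] {J τ E : ℝ}
    (hω : ∀ b, 0 ≤ ω b) (hR : ∀ b, ω b ≤ R) (hR₀ : 0 ≤ R) (hτ : ∑ b, ω b = τ) (hτ₀ : 0 < τ)
    (hE : 0 < E) (hJ : 0 < J) (hm : 1024 * (Fintype.card V : ℝ) ≤ m ^ 2)
    (hmR : 1024 * Fintype.card V * R ≤ m * τ) (hJR : 512 * E * J * R ≤ τ ^ 2)
    (hJm : 512 * E * J ≤ m * τ) :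
    unifProb (fun W : V → V → Fin m => τ ^ 2 / 32 < ∑ z, min (zeroWeight ω (W z)) J ^ 2) ≤
      Real.exp (-E) := by
  have hm₀ : (0 : ℝ) < m := mod_cast NeZero.pos m
  set θ := 64 * E / τ ^ 2 with hθ_def
  have hθ₀ : 0 < θ := by positivity
  have hθ : θ * τ ^ 2 = 64 * E := by rw [hθ_def]; field_simp
  have hθR : θ * J * R ≤ 1 / 8 := by
    rw [hθ_def, div_mul_eq_mul_div, div_mul_eq_mul_div, div_le_iff₀ (by positivity)]
    linarith
  have hθτ : 1 / m * (θ * J) * ∑ b, ω b ≤ 1 / 8 := by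
    calc 1 / m * (θ * J) * ∑ b, ω b = 64 * E * J / (m * τ) := by rw [hτ, hθ_def]; field_simp
      _ ≤ 1 / 8 := by rw [div_le_iff₀ (by positivity)]; linarith
  have h₁ : Fintype.card V / (m : ℝ) ^ 2 ≤ 1 / 1024 := by
    rw [div_le_iff₀ (by positivity)]; linarith
  have h₂ : Fintype.card V * R / (m * τ) ≤ 1 / 1024 := by
    rw [div_le_iff₀ (by positivity)]; linarith
  have hexponent : -(2 * E) + Fintype.card V *
      (θ * (8 * ((1 / m * ∑ b, ω b) ^ 2 + 1 / m * R * ∑ b, ω b))) ≤ -E :=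
    calc _ = -(2 * E) + θ * τ ^ 2 *
          (8 * (Fintype.card V / m ^ 2 + Fintype.card V * R / (m * τ))) := by
          rw [hτ]; field_simp
      _ ≤ -(2 * E) + 64 * E * (8 * (1 / 1024 + 1 / 1024)) := by rw [hθ]; gcongr
      _ = -E := by ring
  calc _ ≤ unifProb (fun W : V → V → Fin m =>
          2 * E < θ * ∑ z, min (zeroWeight ω (W z)) J ^ 2) :=
        unifProb_mono fun W hW => by linarith [mul_lt_mul_of_pos_left hW hθ₀]
    _ ≤ _ := unifProb_lt_sum_sq_min_zeroWeight_le hω hR hR₀ hθ₀ hJ hθR hθτ (2 * E)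
    _ ≤ Real.exp (-E) := Real.exp_le_exp.2 hexponent

theorem unifProb_lt_sum_sq_neighborWeight_le [LinearOrder V] {τ E : ℝ} {Δ D : ℕ}
    (hω : ∀ b, 0 ≤ ω b) (hR : ∀ b, ω b ≤ R) (hR₀ : 0 < R) (hτ : ∑ b, ω b = τ) (hτ₀ : 0 < τ)
    (hE : 0 < E) (hD : 0 < D) (hm : 1024 * (Fintype.card V : ℝ) ≤ m ^ 2)
    (hmR : 1024 * Fintype.card V * R ≤ m * τ) (hRΔ : 16 * R * Δ ≤ τ)
    (hRD : 2 ^ 19 * E ^ 2 * R ^ 3 * D ≤ τ ^ 3) (hmD : 2 ^ 19 * E ^ 2 * R * D ≤ m ^ 2 * τ) :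
    unifProb (fun X : V × V → Fin m => HasSparseNeighborhoods (zeroGraph X) Δ D ∧
      τ ^ 2 / 4 < ∑ z, neighborWeight (zeroGraph X) ω z ^ 2) ≤ 2 * Real.exp (-E) := by
  set J := Real.sqrt (2 * τ * R * D)
  have hJ : 0 < J := by positivity
  have hJD : J ^ 2 = 2 * τ * R * D := Real.sq_sqrt (by positivity)
  have hJR : 512 * E * J * R ≤ τ ^ 2 := by
    refine le_of_sq_le_sq ?_ (by positivity)
    calc (512 * E * J * R) ^ 2 = 2 ^ 19 * E ^ 2 * R ^ 3 * D * τ := by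
          rw [mul_pow, mul_pow, hJD]; ring
      _ ≤ τ ^ 3 * τ := by gcongr
      _ = (τ ^ 2) ^ 2 := by ring
  have hJm : 512 * E * J ≤ m * τ := by
    refine le_of_sq_le_sq ?_ (by positivity)
    calc (512 * E * J) ^ 2 = 2 ^ 19 * E ^ 2 * R * D * τ := by rw [mul_pow, hJD]; ring
      _ ≤ m ^ 2 * τ * τ := by gcongr
      _ = (m * τ) ^ 2 := by ring
  have htail := unifProb_lt_sum_sq_min_zeroWeight_le_exp_neg (m := m) hω hR hR₀.le hτ hτ₀ hE hJ
    hm hmR hJR hJm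
  have hrow : unifProb (fun X : V × V → Fin m =>
      τ ^ 2 / 32 < ∑ z, min (zeroWeight ω fun b => X (z, b)) J ^ 2) ≤ Real.exp (-E) :=
    (unifProb_comp_equiv (Equiv.curry V V (Fin m)) _).trans_le htail
  have hcol : unifProb (fun X : V × V → Fin m =>
      τ ^ 2 / 32 < ∑ z, min (zeroWeight ω fun b => X (b, z)) J ^ 2) ≤ Real.exp (-E) :=
    (unifProb_comp_equiv (((Equiv.prodComm V V).arrowCongr (Equiv.refl _)).trans
      (Equiv.curry V V (Fin m))) _).trans_le htail
  refine (unifProb_mono fun X ⟨hG, hX⟩ => ?_).trans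
    ((unifProb_or_le _ _).trans ((add_le_add hrow hcol).trans_eq (two_mul _).symm))
  by_contra! hlight
  have hsum := hG.sum_sq_neighborWeight_le_of_le_add hω hR hR₀.le hJ.le (hτ ▸ hJD.ge)
    (fun z => zeroWeight_nonneg hω _) (fun z => zeroWeight_nonneg hω _)
    (neighborWeight_zeroGraph_le hω X)
  have hheavy : 16 * R * Δ * τ ≤ τ * τ := by gcongr
  rw [hτ] at hsum
  linarith [hlight.1, hlight.2, hX]

end NeighborWeight

section CommonNeighbors

variable {U V V' : Type*} [Fintype V]

theorem neighborWeight_card_fiber [DecidableEq V] (G : SimpleGraph V) [DecidableRel G.Adj]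
    (S : Finset U) (π : U → V) (z : V) :
    neighborWeight G (fun b => ((S.filter fun u => π u = b).card : ℝ)) z =
      (S.filter fun u => G.Adj z (π u)).card := by
  have hmaps : ∀ u ∈ S.filter fun u => G.Adj z (π u), π u ∈ G.neighborFinset z := by simp
  rw [Finset.card_eq_sum_card_fiberwise hmaps, neighborWeight, Nat.cast_sum]
  refine Finset.sum_congr rfl fun b hb => ?_
  rw [Finset.filter_filter]
  congr! 3 with u
  rw [SimpleGraph.mem_neighborFinset] at hb
  exact ⟨fun h => ⟨h ▸ hb, h⟩, And.right⟩

open Classical in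
theorem card_filter_commonNeighbors_nonempty_le [DecidableEq V] (G : SimpleGraph V)
    [DecidableRel G.Adj] (S : Finset U) (π : U → V) :
    (((S ×ˢ S).filter fun x => (G.commonNeighbors (π x.1) (π x.2)).Nonempty).card : ℝ) ≤
      ∑ z, neighborWeight G (fun b => ((S.filter fun u => π u = b).card : ℝ)) z ^ 2 := by
  let near : V → Finset U := fun z => S.filter fun u => G.Adj z (π u)
  have hsub : ((S ×ˢ S).filter fun x => (G.commonNeighbors (π x.1) (π x.2)).Nonempty) ⊆
      Finset.univ.biUnion fun z => near z ×ˢ near z := by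
    intro x hx
    obtain ⟨hxS, z, hz⟩ := Finset.mem_filter.1 hx
    rw [SimpleGraph.mem_commonNeighbors] at hz
    rw [Finset.mem_product] at hxS
    simp only [near, Finset.mem_biUnion, Finset.mem_univ, true_and, Finset.mem_product,
      Finset.mem_filter]
    exact ⟨z, ⟨hxS.1, hz.1.symm⟩, hxS.2, hz.2.symm⟩
  have hcard := (Finset.card_le_card hsub).trans Finset.card_biUnion_le
  calc _ ≤ ((∑ z, (near z ×ˢ near z).card : ℕ) : ℝ) := mod_cast hcard
    _ = _ := by
      rw [Nat.cast_sum]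
      refine Finset.sum_congr rfl fun z _ => ?_
      rw [Finset.card_product, Nat.cast_mul, ← sq]
      rw [neighborWeight_card_fiber]

open Classical in
theorem sq_card_le_of_injOn [LinearOrder V'] {S : Finset U} {f : U → V'} (hf : Set.InjOn f S)
    {r : U → U → Prop} (hr : ∀ u v, r u v → r v u) :
    S.card ^ 2 ≤ ((S ×ˢ S).filter fun x => r x.1 x.2).card + S.card +
      2 * ((S ×ˢ S).filter fun x => f x.1 < f x.2 ∧ ¬ r x.1 x.2).card := by
  set A := (S ×ˢ S).filter fun x => r x.1 x.2
  set Q := (S ×ˢ S).filter fun x => f x.1 < f x.2 ∧ ¬ r x.1 x.2 with hQ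
  have hcover : S ×ˢ S ⊆ A ∪ S.diag ∪ (Q ∪ Q.image Prod.swap) := by
    intro x hx
    obtain ⟨hu, hv⟩ := Finset.mem_product.1 hx
    simp only [A, hQ, Finset.mem_union, Finset.mem_filter, Finset.mem_diag, Finset.mem_image,
      Prod.exists]
    have hdiag : f x.1 = f x.2 → x.1 = x.2 := hf hu hv
    have hswap := hr x.2 x.1
    by_cases hrx : r x.1 x.2
    · exact .inl (.inl ⟨hx, hrx⟩)
    rcases lt_trichotomy (f x.1) (f x.2) with hlt | heq | hgt
    · exact .inr (.inl ⟨hx, hlt, hrx⟩)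
    · exact .inl (.inr ⟨hu, hdiag heq⟩)
    · exact .inr (.inr ⟨x.2, x.1, ⟨Finset.mk_mem_product hv hu, hgt, fun h => hrx (hswap h)⟩, rfl⟩)
  calc S.card ^ 2 = (S ×ˢ S).card := by rw [Finset.card_product, sq]
    _ ≤ (A ∪ S.diag ∪ (Q ∪ Q.image Prod.swap)).card := Finset.card_le_card hcover
    _ ≤ A.card + S.diag.card + (Q.card + (Q.image Prod.swap).card) :=
        (Finset.card_union_le _ _).trans
          (add_le_add (Finset.card_union_le _ _) (Finset.card_union_le _ _))
    _ ≤ A.card + S.card + (Q.card + Q.card) := by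
        rw [Finset.diag_card]
        exact Nat.add_le_add_left (Nat.add_le_add_left Finset.card_image_le _) _
    _ = _ := by ring

variable [LinearOrder V'] [Fintype V'] {m m' : ℕ} [NeZero m] [NeZero m'] {S : Finset U}
  {f : U → V'} {π : U → V} {E : ℝ}

theorem unifProb_forall_adj_imp_commonNeighbors_le [DecidableEq V] (hf : Set.InjOn f S)
    (hS : 2 ≤ S.card) (hm' : 2 ≤ m') (hV' : 48 * Fintype.card V' ≤ m' ^ 2)
    (hE : 16 * m' * E ≤ (S.card : ℝ) ^ 2)
    {G : SimpleGraph V} [DecidableRel G.Adj]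
    (hG : ∑ z, neighborWeight G (fun b => ((S.filter fun u => π u = b).card : ℝ)) z ^ 2 ≤
      (S.card : ℝ) ^ 2 / 4) :
    unifProb (fun X : V' × V' → Fin m' => ∀ u ∈ S, ∀ v ∈ S, (prunedGraph X).Adj (f u) (f v) →
      (G.commonNeighbors (π u) (π v)).Nonempty) ≤ Real.exp (-E) := by
  classical
  set Q := (S ×ˢ S).filter fun x =>
    f x.1 < f x.2 ∧ ¬ (G.commonNeighbors (π x.1) (π x.2)).Nonempty
  have hQf_card : (Q.image (Prod.map f f)).card = Q.card := by
    refine Finset.card_image_of_injOn ((hf.prodMap hf).mono fun x hx => ?_)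
    simpa using Finset.mem_product.1 (Finset.mem_filter.1 hx).1
  have hQf : ∀ e ∈ Q.image (Prod.map f f), e.1 < e.2 := by
    rintro _ he
    obtain ⟨x, hx, rfl⟩ := Finset.mem_image.1 he
    exact (Finset.mem_filter.1 hx).2.1
  have hcount : (S.card : ℝ) ^ 2 ≤
      (((S ×ˢ S).filter fun x => (G.commonNeighbors (π x.1) (π x.2)).Nonempty).card : ℝ) +
        S.card + 2 * Q.card := by
    have := sq_card_le_of_injOn hf (r := fun u v => (G.commonNeighbors (π u) (π v)).Nonempty)
      fun u v h => by rwa [SimpleGraph.commonNeighbors_symm]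
    exact_mod_cast this
  have hclose := (card_filter_commonNeighbors_nonempty_le G S π).trans hG
  have hS' : (2 : ℝ) ≤ S.card := mod_cast hS
  have hm₀ : (0 : ℝ) < m' := mod_cast NeZero.pos m'
  calc _ ≤ unifProb (fun X : V' × V' → Fin m' =>
          ∀ e ∈ Q.image (Prod.map f f), ¬ (prunedGraph X).Adj e.1 e.2) := by
        refine unifProb_mono fun X hX _ he hadj => ?_
        obtain ⟨x, hx, rfl⟩ := Finset.mem_image.1 he
        obtain ⟨hxS, -, hfar⟩ := Finset.mem_filter.1 hx
        exact hfar (hX x.1 (Finset.mem_product.1 hxS).1 x.2 (Finset.mem_product.1 hxS).2 hadj)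
    _ ≤ Real.exp (-((Q.image (Prod.map f f)).card / (2 * m'))) :=
        unifProb_forall_not_adj_le_exp hQf hm' hV'
    _ ≤ Real.exp (-E) := by
        rw [hQf_card, Real.exp_le_exp, neg_le_neg_iff, le_div_iff₀ (mul_pos two_pos hm₀)]
        nlinarith

theorem unifProb_hasSparseNeighborhoods_and_forall_le [LinearOrder V] {R : ℝ} {Δ D : ℕ}
    (hf : Set.InjOn f S) (hR : ∀ b, ((S.filter fun u => π u = b).card : ℝ) ≤ R) (hR₀ : 0 < R)
    (hE₀ : 0 < E) (hD : 0 < D) (hS : 2 ≤ S.card)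
    (hm : 1024 * (Fintype.card V : ℝ) ≤ m ^ 2) (hmR : 1024 * Fintype.card V * R ≤ m * S.card)
    (hRΔ : 16 * R * Δ ≤ S.card) (hRD : 2 ^ 19 * E ^ 2 * R ^ 3 * D ≤ (S.card : ℝ) ^ 3)
    (hmD : 2 ^ 19 * E ^ 2 * R * D ≤ m ^ 2 * S.card) (hm' : 2 ≤ m')
    (hV' : 48 * Fintype.card V' ≤ m' ^ 2) (hE : 16 * m' * E ≤ (S.card : ℝ) ^ 2) :
    unifProb (fun X : (V × V → Fin m) × (V' × V' → Fin m') =>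
      HasSparseNeighborhoods (zeroGraph X.1) Δ D ∧ ∀ u ∈ S, ∀ v ∈ S,
        (prunedGraph X.2).Adj (f u) (f v) →
          ((zeroGraph X.1).commonNeighbors (π u) (π v)).Nonempty) ≤ 3 * Real.exp (-E) := by
  have hτ : ∑ b, ((S.filter fun u => π u = b).card : ℝ) = S.card := by
    exact_mod_cast (Finset.card_eq_sum_card_fiberwise fun u _ => Finset.mem_univ (π u)).symm
  have hweight := unifProb_lt_sum_sq_neighborWeight_le (m := m) (fun b => Nat.cast_nonneg _) hR hR₀
    hτ (by positivity) hE₀ hD hm hmR hRΔ hRD hmD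
  refine (unifProb_le_add_of_forall_fst (Real.exp_nonneg (-E)) fun X₁ hX₁ => ?_).trans
    ((add_le_add_left hweight _).trans_eq (by ring))
  by_cases hsparse : HasSparseNeighborhoods (zeroGraph X₁) Δ D
  · have hG := not_lt.1 fun h => hX₁ ⟨hsparse, h⟩
    exact (unifProb_mono fun X₂ hX => hX.2).trans
      (unifProb_forall_adj_imp_commonNeighbors_le hf hS hm' hV' hE hG)
  · refine (unifProb_mono fun X₂ hX => hsparse hX.1).trans ?_
    rw [unifProb_false]
    positivity

end CommonNeighbors

section MixedGraph

variable {V : Type*} {H₁ G₁ H₂ G₂ : SimpleGraph V} {u v w : V}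

/-- The graph whose edges are the edges of `H₁` without a common neighbor in `G₂`, and the edges
of `H₂` without a common neighbor in `G₁`. Mixing two triangle-free graphs in this way destroys
the triangles having edges from both. -/
def mixedGraph (H₁ G₁ H₂ G₂ : SimpleGraph V) : SimpleGraph V where
  Adj u v := H₁.Adj u v ∧ G₂.commonNeighbors u v = ∅ ∨
    H₂.Adj u v ∧ G₁.commonNeighbors u v = ∅
  symm := ⟨fun u v h => by
    simpa only [G₁.commonNeighbors_symm v u, G₂.commonNeighbors_symm v u, H₁.adj_comm v u,
      H₂.adj_comm v u] using h⟩
  loopless := ⟨fun u h => h.elim (fun h => h.1.ne rfl) fun h => h.1.ne rfl⟩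

theorem mixedGraph_comm : mixedGraph H₁ G₁ H₂ G₂ = mixedGraph H₂ G₂ H₁ G₁ := by
  ext u v
  exact or_comm

theorem not_mixedGraph_adj_of_adj_of_adj (h₁ : H₁ ≤ G₁) (hH₁ : H₁.CliqueFree 3)
    (huv : H₁.Adj u v) (hvw : H₁.Adj v w) : ¬ (mixedGraph H₁ G₁ H₂ G₂).Adj u w := by
  rintro (⟨huw, -⟩ | ⟨-, huw⟩)
  · exact cliqueFree_three_iff.1 hH₁ u v w huv hvw huw
  · exact Set.eq_empty_iff_forall_notMem.1 huw v ⟨h₁ huv, h₁ hvw.symm⟩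

theorem mixedGraph_cliqueFree_three (h₁ : H₁ ≤ G₁) (h₂ : H₂ ≤ G₂) (hH₁ : H₁.CliqueFree 3)
    (hH₂ : H₂.CliqueFree 3) : (mixedGraph H₁ G₁ H₂ G₂).CliqueFree 3 := by
  have no_path₁ {u v w} (huv : H₁.Adj u v) (hvw : H₁.Adj v w) :
      ¬ (mixedGraph H₁ G₁ H₂ G₂).Adj u w :=
    not_mixedGraph_adj_of_adj_of_adj h₁ hH₁ huv hvw
  have no_path₂ {u v w} (huv : H₂.Adj u v) (hvw : H₂.Adj v w) :
      ¬ (mixedGraph H₁ G₁ H₂ G₂).Adj u w :=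
    mixedGraph_comm (H₁ := H₁) ▸ not_mixedGraph_adj_of_adj_of_adj h₂ hH₂ huv hvw
  -- Two of the three edges of a triangle come from the same graph.
  refine cliqueFree_three_iff.2 fun u v w huv hvw huw => ?_
  rcases huv.imp And.left And.left with huv' | huv' <;>
    rcases hvw.imp And.left And.left with hvw' | hvw' <;>
    rcases huw.imp And.left And.left with huw' | huw'
  · exact no_path₁ huv' hvw' huw
  · exact no_path₁ huv' hvw' huw
  · exact no_path₁ huv'.symm huw' hvw
  · exact no_path₂ huw' hvw'.symm huv
  · exact no_path₁ huw' hvw'.symm huv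
  · exact no_path₂ huv'.symm huw' hvw
  · exact no_path₂ huv' hvw' huw
  · exact no_path₂ huv' hvw' huw

end MixedGraph

section UnionBound

theorem mul_three_mul_exp_neg_le {c N : ℕ} (hc : c ≤ 2 ^ (2 * N)) (hN : 5 ≤ N) :
    (c : ℝ) * (3 * Real.exp (-(3 * N))) ≤ 1 / 10 := by
  have hexp : Real.exp (-(3 * N)) ≤ ((1 / 2) ^ 3) ^ N := by
    have half : Real.exp (-1) ≤ 1 / 2 := by
      rw [Real.exp_neg, inv_le_comm₀ (Real.exp_pos _) (by norm_num)]
      linarith [Real.add_one_le_exp 1]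
    calc Real.exp (-(3 * N)) = (Real.exp (-1) ^ 3) ^ N := by
          rw [← Real.exp_nat_mul, ← Real.exp_nat_mul]
          congr 1
          push_cast
          ring
      _ ≤ _ := by gcongr
  calc (c : ℝ) * (3 * Real.exp (-(3 * N))) ≤ (2 ^ 2) ^ N * (3 * ((1 / 2) ^ 3) ^ N) := by
        gcongr
        rw [← pow_mul]
        exact_mod_cast hc
    _ = 3 * (1 / 2) ^ N := by
        rw [mul_left_comm, ← mul_pow]
        norm_num
    _ ≤ 3 * (1 / 2) ^ 5 :=
        mul_le_mul_of_nonneg_left (pow_le_pow_of_le_one (by norm_num) (by norm_num) hN)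
          (by norm_num)
    _ ≤ 1 / 10 := by norm_num

theorem sq_mul_half_pow_mul_exp_le {v : ℕ} (hv : 3840 ≤ v) :
    (v : ℝ) ^ 2 * ((1 / 2) ^ v * Real.exp (v / 32)) ≤ 1 / 10 := by
  have hv' : (3840 : ℝ) ≤ v := mod_cast hv
  have hv₀ : (0 : ℝ) < v := by linarith
  have half : (1 / 2 : ℝ) ≤ Real.exp (-(1 / 2)) := by
    linarith [Real.one_sub_le_exp_neg (1 / 2 : ℝ)]
  calc (v : ℝ) ^ 2 * ((1 / 2) ^ v * Real.exp (v / 32))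
      ≤ v ^ 2 * (Real.exp (-(1 / 2)) ^ v * Real.exp (v / 32)) := by gcongr
    _ ≤ v ^ 2 * Real.exp (-(v / 4)) := by
        rw [← Real.exp_nat_mul, ← Real.exp_add]
        gcongr
        linarith
    _ ≤ v ^ 2 * ((v / 4) ^ 3 / Nat.factorial 3 : ℝ)⁻¹ := by
        rw [Real.exp_neg]
        gcongr
        exact Real.pow_div_factorial_le_exp _ (by positivity) 3
    _ = 384 / v := by
        norm_num [Nat.factorial]
        field_simp
        norm_num
    _ ≤ 1 / 10 := by
        rw [div_le_div_iff₀ hv₀ (by norm_num)]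
        linarith

theorem unifProb_not_hasSparseNeighborhoods_le_one_fifth {V : Type*} [Fintype V] [LinearOrder V]
    {v L : ℕ} [NeZero v] (hV : Fintype.card V = v ^ 2) (hv : 3840 ≤ v) (hL : 5 ≤ L)
    (hvL : v ^ 2 ≤ 2 ^ L) :
    unifProb (fun X : V × V → Fin (32 * v) =>
      ¬ HasSparseNeighborhoods (zeroGraph X) v (3 * L)) ≤ 1 / 5 := by
  have hv₀ : (v : ℝ) ≠ 0 := NeZero.ne _
  have hdegree := sq_mul_half_pow_mul_exp_le hv
  have hcodegree : ((v : ℝ) ^ 2) ^ 2 * ((1 / 2) ^ (3 * L) * Real.exp (1 / 1024)) ≤ 1 / 10 := by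
    calc ((v : ℝ) ^ 2) ^ 2 * ((1 / 2) ^ (3 * L) * Real.exp (1 / 1024))
        ≤ (2 ^ L) ^ 2 * ((1 / 2) ^ (3 * L) * 2) := by
          gcongr
          · exact_mod_cast hvL
          · exact (Real.exp_le_exp.2 (by linarith [Real.log_two_gt_d9])).trans
              (Real.exp_log two_pos).le
      _ = 2 * (1 / 2) ^ L := by
          rw [pow_mul, ← pow_mul, mul_comm L 2, pow_mul, ← mul_assoc, ← mul_pow, mul_comm]
          norm_num
      _ ≤ 2 * (1 / 2) ^ 5 := mul_le_mul_of_nonneg_left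
          (pow_le_pow_of_le_one (by norm_num) (by norm_num) hL) (by norm_num)
      _ ≤ 1 / 10 := by norm_num
  have hdegree_mean : 1 / (32 * v : ℝ) * v ^ 2 = v / 32 := by field_simp
  have hcodegree_mean : (1 / (32 * v : ℝ)) ^ 2 * v ^ 2 = 1 / 1024 := by
    field_simp
    norm_num
  refine (unifProb_not_hasSparseNeighborhoods_le _ _).trans ?_
  rw [hV]
  push_cast
  rw [hdegree_mean, hcodegree_mean]
  linarith

theorem card_filter_card_image_le {U V : Type*} [Fintype U] [Fintype V]
    [DecidableEq V] {π : U → V} {r s : ℕ}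
    (hπ : ∀ b, (Finset.univ.filter fun u => π u = b).card ≤ r) (hs : s ≤ Fintype.card V) :
    (Finset.univ.filter fun S : Finset U => (S.image π).card ≤ s).card ≤
      Fintype.card V ^ s * 2 ^ (r * s) := by
  classical
  have hcover : (Finset.univ.filter fun S : Finset U => (S.image π).card ≤ s) ⊆
      (Finset.univ.powersetCard s).biUnion fun W : Finset V =>
        (Finset.univ.filter fun u => π u ∈ W).powerset := by
    intro S hS
    obtain ⟨W, hW, -, hWs⟩ := Finset.exists_subsuperset_card_eq (Finset.subset_univ (S.image π))
      (Finset.mem_filter.1 hS).2 hs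
    exact Finset.mem_biUnion.2 ⟨W, Finset.mem_powersetCard.2 ⟨Finset.subset_univ _, hWs⟩,
      Finset.mem_powerset.2 fun u hu =>
        Finset.mem_filter.2 ⟨Finset.mem_univ _, hW (Finset.mem_image_of_mem π hu)⟩⟩
  refine (Finset.card_le_card hcover).trans ((Finset.card_biUnion_le_card_mul _ _ (2 ^ (r * s))
    fun W hW => ?_).trans (Nat.mul_le_mul_right _ ?_))
  · rw [Finset.card_powerset, ← (Finset.mem_powersetCard.1 hW).2]
    refine Nat.pow_le_pow_right two_pos (Finset.card_le_mul_card_image_of_maps_to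
      (fun u hu => (Finset.mem_filter.1 hu).2) _ fun b _ => ?_)
    exact (Finset.card_le_card (Finset.filter_subset_filter _ (Finset.subset_univ _))).trans (hπ b)
  · rw [Finset.card_powersetCard, Finset.card_univ]
    exact Nat.choose_le_pow _ _

end UnionBound

section MixedSampling

variable {V₁ V₂ : Type*} [Fintype V₁] [LinearOrder V₁] [Fintype V₂] [LinearOrder V₂] {x w : ℕ}
  [NeZero x] [NeZero w] {π : V₂ → V₁} {S : Finset V₂}

theorem unifProb_hasSparseNeighborhoods_and_forall_le_of_card_eq_sq {U : Type*} {v v' D : ℕ}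
    [NeZero v] [NeZero v'] {T : Finset U} {f : U → V₂} {ρ : U → V₁} {R E : ℝ}
    (hV₁ : Fintype.card V₁ = v ^ 2) (hV₂ : Fintype.card V₂ = v' ^ 2) (hf : Set.InjOn f T)
    (hR : ∀ b, ((T.filter fun u => ρ u = b).card : ℝ) ≤ R) (hR₀ : 0 < R) (hE₀ : 0 < E) (hD : 0 < D)
    (hT : 2 ≤ T.card) (hvR : 32 * v * R ≤ T.card)
    (hRD : 2 ^ 19 * E ^ 2 * R ^ 3 * D ≤ (T.card : ℝ) ^ 3)
    (hvD : 2 ^ 9 * E ^ 2 * R * D ≤ v ^ 2 * T.card) (hE : 512 * v' * E ≤ (T.card : ℝ) ^ 2) :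
    unifProb (fun X : (V₁ × V₁ → Fin (32 * v)) × (V₂ × V₂ → Fin (32 * v')) =>
      HasSparseNeighborhoods (zeroGraph X.1) v D ∧ ∀ u ∈ T, ∀ z ∈ T,
        (prunedGraph X.2).Adj (f u) (f z) →
          ((zeroGraph X.1).commonNeighbors (ρ u) (ρ z)).Nonempty) ≤ 3 * Real.exp (-E) := by
  have hv₀ : (0 : ℝ) ≤ v := v.cast_nonneg
  have hv'₀ : 0 < v' := NeZero.pos v'
  refine unifProb_hasSparseNeighborhoods_and_forall_le hf hR hR₀ hE₀ hD hT ?_ ?_ ?_ hRD ?_ ?_ ?_ ?_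
  · exact le_of_eq (by rw [hV₁]; push_cast; ring)
  · rw [hV₁]
    push_cast
    nlinarith [mul_le_mul_of_nonneg_left hvR hv₀]
  · nlinarith [mul_nonneg hv₀ hR₀.le]
  · push_cast
    linarith
  · linarith
  · rw [hV₂]
    nlinarith
  · push_cast
    linarith

theorem unifProb_forall_adj_map_le (h₁ : Fintype.card V₁ = w ^ 2)
    (h₂ : Fintype.card V₂ = w ^ 2 * x ^ 4) (hw : 2 ^ 26 * x ^ 19 ≤ w)
    (hS : S.card = 1536 * x ^ 4 * w) (hπ : Set.InjOn π S) :
    unifProb (fun X : (V₂ × V₂ → Fin (32 * (w * x ^ 2))) × (V₁ × V₁ → Fin (32 * w)) =>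
      HasSparseNeighborhoods (zeroGraph X.1) (w * x ^ 2) (3 * x ^ 4) ∧ ∀ u ∈ S, ∀ v ∈ S,
        (prunedGraph X.2).Adj (π u) (π v) →
          ((zeroGraph X.1).commonNeighbors u v).Nonempty) ≤
      3 * Real.exp (-(3 * (1536 * x ^ 4 * w * x ^ 4 : ℕ))) := by
  have hx₀ : 0 < x := NeZero.pos x
  have hw₀ : 0 < w := NeZero.pos w
  have hx₂₄ : (x : ℝ) ^ 2 ≤ x ^ 4 := mod_cast Nat.pow_le_pow_right hx₀ (by norm_num)
  have hw₁₂ : (2 : ℝ) ^ 26 * x ^ 12 ≤ w :=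
    mod_cast (Nat.mul_le_mul_left _ (Nat.pow_le_pow_right hx₀ (by norm_num))).trans hw
  have hS' : (S.card : ℝ) = 1536 * x ^ 4 * w := mod_cast hS
  have hS₂ : 2 ≤ S.card := by
    rw [hS]
    nlinarith [show 0 < x ^ 4 * w by positivity]
  have hfiber (b : V₂) : ((S.filter fun u => id u = b).card : ℝ) ≤ 1 := by
    exact_mod_cast Finset.card_le_one.2 fun u hu v hv => by simp_all
  refine unifProb_hasSparseNeighborhoods_and_forall_le_of_card_eq_sq (R := 1) (ρ := id)
    (h₂.trans (by ring)) h₁ hπ hfiber one_pos (by positivity) (by positivity) hS₂ ?_ ?_ ?_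
    (le_of_eq (by rw [hS']; push_cast; ring)) <;> rw [hS'] <;> push_cast
  · nlinarith [mul_le_mul_of_nonneg_left hx₂₄ (w.cast_nonneg (α := ℝ)),
      mul_nonneg (w.cast_nonneg (α := ℝ)) (sq_nonneg (x : ℝ))]
  · calc (2 : ℝ) ^ 19 * (3 * (1536 * x ^ 4 * w * x ^ 4)) ^ 2 * 1 ^ 3 * (3 * x ^ 4)
        = (1536 * (x : ℝ) ^ 4 * w) ^ 2 * (2 ^ 19 * 27 * x ^ 12) := by ring
      _ ≤ (1536 * (x : ℝ) ^ 4 * w) ^ 2 * (1536 * x ^ 4 * w) := by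
          have hx₄ : (1 : ℝ) ≤ x ^ 4 := mod_cast Nat.one_le_pow _ _ hx₀
          gcongr _ * ?_
          nlinarith
      _ = (1536 * (x : ℝ) ^ 4 * w) ^ 3 := by ring
  · calc (2 : ℝ) ^ 9 * (3 * (1536 * x ^ 4 * w * x ^ 4)) ^ 2 * 1 * (3 * x ^ 4)
        = 2 ^ 9 * 27 * 1536 * (x : ℝ) ^ 12 * (1536 * x ^ 8 * w ^ 2) := by ring
      _ ≤ (w : ℝ) * (1536 * x ^ 8 * w ^ 2) := by
          gcongr ?_ * _
          linarith
      _ = (w * (x : ℝ) ^ 2) ^ 2 * (1536 * x ^ 4 * w) := by ring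

theorem unifProb_forall_adj_le (h₁ : Fintype.card V₁ = w ^ 2)
    (h₂ : Fintype.card V₂ = w ^ 2 * x ^ 4) (hw : 2 ^ 26 * x ^ 19 ≤ w)
    (hS : S.card = 1536 * x ^ 5 * w)
    (hπ : ∀ b, (Finset.univ.filter fun u => π u = b).card ≤ x ^ 4) :
    unifProb (fun X : (V₁ × V₁ → Fin (32 * w)) × (V₂ × V₂ → Fin (32 * (w * x ^ 2))) =>
      HasSparseNeighborhoods (zeroGraph X.1) w (3 * x ^ 4) ∧ ∀ u ∈ S, ∀ v ∈ S,
        (prunedGraph X.2).Adj u v → ((zeroGraph X.1).commonNeighbors (π u) (π v)).Nonempty) ≤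
      3 * Real.exp (-(3 * (1536 * x ^ 4 * w * x ^ 4 : ℕ))) := by
  have hx₀ : 0 < x := NeZero.pos x
  have hw₀ : 0 < w := NeZero.pos w
  have hx₄₅ : (x : ℝ) ^ 4 ≤ x ^ 5 := mod_cast Nat.pow_le_pow_right hx₀ (by norm_num)
  have hw₁₉ : (2 : ℝ) ^ 26 * x ^ 19 ≤ w := mod_cast hw
  have hw₁₇ : (2 : ℝ) ^ 26 * x ^ 17 ≤ w :=
    mod_cast (Nat.mul_le_mul_left _ (Nat.pow_le_pow_right hx₀ (by norm_num))).trans hw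
  have hS' : (S.card : ℝ) = 1536 * x ^ 5 * w := mod_cast hS
  have hS₂ : 2 ≤ S.card := by
    rw [hS]
    nlinarith [show 0 < x ^ 5 * w by positivity]
  have hfiber (b : V₁) : ((S.filter fun u => π u = b).card : ℝ) ≤ (x : ℝ) ^ 4 := by
    exact_mod_cast (Finset.card_le_card (Finset.filter_subset_filter _ S.subset_univ)).trans (hπ b)
  refine unifProb_hasSparseNeighborhoods_and_forall_le_of_card_eq_sq (f := id) (R := x ^ 4)
    h₁ (h₂.trans (by ring)) (Set.injOn_id _) hfiber (by positivity) (by positivity) (by positivity)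
    hS₂ ?_ ?_ ?_ (le_of_eq (by rw [hS']; push_cast; ring)) <;> rw [hS'] <;> push_cast
  · nlinarith [mul_le_mul_of_nonneg_left hx₄₅ (w.cast_nonneg (α := ℝ)),
      mul_nonneg (w.cast_nonneg (α := ℝ)) (pow_nonneg (x.cast_nonneg (α := ℝ)) 4)]
  · calc (2 : ℝ) ^ 19 * (3 * (1536 * x ^ 4 * w * x ^ 4)) ^ 2 * (x ^ 4) ^ 3 * (3 * x ^ 4)
        = (1536 * (x : ℝ) ^ 5 * w) ^ 2 * x ^ 5 * (2 ^ 19 * 27 * x ^ 17) := by ring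
      _ ≤ (1536 * (x : ℝ) ^ 5 * w) ^ 2 * x ^ 5 * (1536 * w) := by
          gcongr _ * ?_
          linarith
      _ = (1536 * (x : ℝ) ^ 5 * w) ^ 3 := by ring
  · calc (2 : ℝ) ^ 9 * (3 * (1536 * x ^ 4 * w * x ^ 4)) ^ 2 * x ^ 4 * (3 * x ^ 4)
        = 2 ^ 9 * 27 * 1536 * (x : ℝ) ^ 19 * (1536 * x ^ 5 * w ^ 2) := by ring
      _ ≤ (w : ℝ) * (1536 * x ^ 5 * w ^ 2) := by
          gcongr ?_ * _
          linarith
      _ = (w : ℝ) ^ 2 * (1536 * x ^ 5 * w) := by ring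

theorem unifProb_exists_injOn_le (h₁ : Fintype.card V₁ = w ^ 2)
    (h₂ : Fintype.card V₂ = w ^ 2 * x ^ 4) (hw : 2 ^ 26 * x ^ 19 ≤ w)
    (hpow : w ^ 2 * x ^ 4 ≤ 2 ^ x ^ 4) :
    unifProb (fun X : (V₁ × V₁ → Fin (32 * w)) × (V₂ × V₂ → Fin (32 * (w * x ^ 2))) =>
      ∃ S ∈ Finset.univ.filter fun S : Finset V₂ => S.card = 1536 * x ^ 4 * w ∧ Set.InjOn π S,
        HasSparseNeighborhoods (zeroGraph X.2) (w * x ^ 2) (3 * x ^ 4) ∧ ∀ u ∈ S, ∀ v ∈ S,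
          (prunedGraph X.1).Adj (π u) (π v) →
            ((zeroGraph X.2).commonNeighbors u v).Nonempty) ≤ 1 / 10 := by
  have hx₀ : 0 < x := NeZero.pos x
  have hw₀ : 0 < w := NeZero.pos w
  set s := 1536 * x ^ 4 * w with hs
  refine (unifProb_exists_mem_le fun S hS => ?_).trans
    (mul_three_mul_exp_neg_le (N := s * x ^ 4) ?_ ?_)
  · obtain ⟨-, hS, hπ⟩ := Finset.mem_filter.1 hS
    exact (unifProb_comp_equiv (Equiv.prodComm _ _) _).trans_le
      (unifProb_forall_adj_map_le h₁ h₂ hw hS hπ)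
  · calc _ ≤ ((Finset.univ : Finset V₂).powersetCard s).card :=
          Finset.card_le_card fun S hS => Finset.mem_powersetCard.2
            ⟨S.subset_univ, (Finset.mem_filter.1 hS).2.1⟩
      _ ≤ (w ^ 2 * x ^ 4) ^ s := by
          rw [Finset.card_powersetCard, Finset.card_univ, h₂]
          exact Nat.choose_le_pow _ _
      _ ≤ (2 ^ x ^ 4) ^ s := Nat.pow_le_pow_left hpow s
      _ ≤ 2 ^ (2 * (s * x ^ 4)) := by
          rw [← pow_mul]
          exact Nat.pow_le_pow_right two_pos (by rw [mul_comm]; omega)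
  · nlinarith [show 0 < x ^ 4 * w * x ^ 4 by positivity]

theorem unifProb_exists_card_image_le (h₁ : Fintype.card V₁ = w ^ 2)
    (h₂ : Fintype.card V₂ = w ^ 2 * x ^ 4) (hw : 2 ^ 26 * x ^ 19 ≤ w)
    (hpow : w ^ 2 * x ^ 4 ≤ 2 ^ x ^ 4)
    (hπ : ∀ b, (Finset.univ.filter fun u => π u = b).card ≤ x ^ 4) :
    unifProb (fun X : (V₁ × V₁ → Fin (32 * w)) × (V₂ × V₂ → Fin (32 * (w * x ^ 2))) =>
      ∃ S ∈ Finset.univ.filter fun S : Finset V₂ =>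
          S.card = 1536 * x ^ 5 * w ∧ (S.image π).card ≤ 1536 * x ^ 4 * w,
        HasSparseNeighborhoods (zeroGraph X.1) w (3 * x ^ 4) ∧ ∀ u ∈ S, ∀ v ∈ S,
          (prunedGraph X.2).Adj u v →
            ((zeroGraph X.1).commonNeighbors (π u) (π v)).Nonempty) ≤ 1 / 10 := by
  have hx₀ : 0 < x := NeZero.pos x
  have hw₀ : 0 < w := NeZero.pos w
  have hw₄ : 2 ^ 26 * x ^ 4 ≤ w :=
    (Nat.mul_le_mul_left _ (Nat.pow_le_pow_right hx₀ (by norm_num))).trans hw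
  set s := 1536 * x ^ 4 * w with hs
  refine (unifProb_exists_mem_le fun S hS =>
    unifProb_forall_adj_le h₁ h₂ hw (Finset.mem_filter.1 hS).2.1 hπ).trans
      (mul_three_mul_exp_neg_le (N := s * x ^ 4) ?_ ?_)
  · calc _ ≤ (Finset.univ.filter fun S : Finset V₂ => (S.image π).card ≤ s).card :=
          Finset.card_le_card fun S hS => Finset.mem_filter.2
            ⟨Finset.mem_univ S, (Finset.mem_filter.1 hS).2.2⟩
      _ ≤ (w ^ 2) ^ s * 2 ^ (x ^ 4 * s) := by
          rw [← h₁]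
          exact card_filter_card_image_le hπ (by rw [h₁]; nlinarith)
      _ ≤ (2 ^ x ^ 4) ^ s * 2 ^ (x ^ 4 * s) := Nat.mul_le_mul_right _ <|
          Nat.pow_le_pow_left ((Nat.le_mul_of_pos_right _ (pow_pos hx₀ 4)).trans hpow) s
      _ = 2 ^ (2 * (s * x ^ 4)) := by ring
  · nlinarith [show 0 < x ^ 4 * w * x ^ 4 by positivity]

theorem exists_forall_adj_and_not_commonNeighbors (h₁ : Fintype.card V₁ = w ^ 2)
    (h₂ : Fintype.card V₂ = w ^ 2 * x ^ 4) (hx : 2 ≤ x) (hw : 2 ^ 26 * x ^ 19 ≤ w)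
    (hpow : w ^ 2 * x ^ 4 ≤ 2 ^ x ^ 4)
    (hπ : ∀ b, (Finset.univ.filter fun u => π u = b).card ≤ x ^ 4) :
    ∃ X : (V₁ × V₁ → Fin (32 * w)) × (V₂ × V₂ → Fin (32 * (w * x ^ 2))),
      (∀ S : Finset V₂, S.card = 1536 * x ^ 4 * w → Set.InjOn π S → ∃ u ∈ S, ∃ v ∈ S,
        (prunedGraph X.1).Adj (π u) (π v) ∧ (zeroGraph X.2).commonNeighbors u v = ∅) ∧
      ∀ S : Finset V₂, S.card = 1536 * x ^ 5 * w → (S.image π).card ≤ 1536 * x ^ 4 * w →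
        ∃ u ∈ S, ∃ v ∈ S, (prunedGraph X.2).Adj u v ∧
          (zeroGraph X.1).commonNeighbors (π u) (π v) = ∅ := by
  have hx₁₉ : 1 ≤ x ^ 19 := Nat.one_le_pow _ _ (by linarith)
  have hx₂ : 1 ≤ x ^ 2 := Nat.one_le_pow _ _ (by linarith)
  have hx₄ : 5 ≤ x ^ 4 := (by norm_num : 5 ≤ 2 ^ 4).trans (Nat.pow_le_pow_left hx 4)
  have hsparse₁ : unifProb (fun X : (V₁ × V₁ → Fin (32 * w)) ×
      (V₂ × V₂ → Fin (32 * (w * x ^ 2))) =>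
        ¬ HasSparseNeighborhoods (zeroGraph X.1) w (3 * x ^ 4)) ≤ 1 / 5 :=
    (unifProb_fst _).trans_le <| unifProb_not_hasSparseNeighborhoods_le_one_fifth h₁
      (by linarith) hx₄ ((Nat.le_mul_of_pos_right _ (by linarith)).trans hpow)
  have hsparse₂ : unifProb (fun X : (V₁ × V₁ → Fin (32 * w)) ×
      (V₂ × V₂ → Fin (32 * (w * x ^ 2))) =>
        ¬ HasSparseNeighborhoods (zeroGraph X.2) (w * x ^ 2) (3 * x ^ 4)) ≤ 1 / 5 :=
    (unifProb_snd _).trans_le <| unifProb_not_hasSparseNeighborhoods_le_one_fifth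
      (h₂.trans (by ring)) (by nlinarith) hx₄ (by linarith [mul_pow w (x ^ 2) 2, pow_mul x 2 2])
  have hlt := ((unifProb_or_le _ _).trans (add_le_add
    ((unifProb_or_le _ _).trans (add_le_add hsparse₁ hsparse₂))
    ((unifProb_or_le _ _).trans (add_le_add (unifProb_exists_injOn_le (π := π) h₁ h₂ hw hpow)
      (unifProb_exists_card_image_le h₁ h₂ hw hpow hπ))))).trans_lt (by norm_num : _ < (1 : ℝ))
  obtain ⟨X, hX⟩ := exists_not_of_unifProb_lt_one hlt
  push Not at hX
  obtain ⟨⟨h₁, h₂⟩, hA, hB⟩ := hX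
  exact ⟨X, fun S hS hπS => hA S (Finset.mem_filter.2 ⟨Finset.mem_univ S, hS, hπS⟩) h₂,
    fun S hS hSπ => hB S (Finset.mem_filter.2 ⟨Finset.mem_univ S, hS, hSπ⟩) h₁⟩

theorem exists_cliqueFree_three_forall_exists_adj {V₁ V₂ : Type*} [Fintype V₁] [LinearOrder V₁]
    [Fintype V₂] [LinearOrder V₂] {x w : ℕ} {π : V₂ → V₁} (h₁ : Fintype.card V₁ = w ^ 2)
    (h₂ : Fintype.card V₂ = w ^ 2 * x ^ 4) (hx : 2 ≤ x) (hw : 2 ^ 26 * x ^ 19 ≤ w)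
    (hpow : w ^ 2 * x ^ 4 ≤ 2 ^ x ^ 4)
    (hπ : ∀ b, (Finset.univ.filter fun u => π u = b).card ≤ x ^ 4) :
    ∃ G : SimpleGraph V₂, G.CliqueFree 3 ∧
      ∀ S : Finset V₂, S.card = 1536 * x ^ 5 * w → ∃ u ∈ S, ∃ v ∈ S, G.Adj u v := by
  have : NeZero x := ⟨by linarith⟩
  have : NeZero w := ⟨by nlinarith [Nat.one_le_pow 19 x (by linarith)]⟩
  obtain ⟨X, hA, hB⟩ := exists_forall_adj_and_not_commonNeighbors h₁ h₂ hx hw hpow hπ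
  refine ⟨mixedGraph ((prunedGraph X.1).comap π) ((zeroGraph X.1).comap π) (prunedGraph X.2)
    (zeroGraph X.2), mixedGraph_cliqueFree_three (fun _ _ h => prunedGraph_le X.1 h)
      (prunedGraph_le X.2) ?_ (prunedGraph_cliqueFree_three X.2), fun S hS => ?_⟩
  · exact cliqueFree_three_iff.2 fun u v w =>
      cliqueFree_three_iff.1 (prunedGraph_cliqueFree_three X.1) (π u) (π v) (π w)
  by_cases himage : (S.image π).card ≤ 1536 * x ^ 4 * w
  · obtain ⟨u, hu, v, hv, hadj, hcommon⟩ := hB S hS himage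
    have hcomap : ((zeroGraph X.1).comap π).commonNeighbors u v =
        π ⁻¹' (zeroGraph X.1).commonNeighbors (π u) (π v) := rfl
    exact ⟨u, hu, v, hv, .inr ⟨hadj, by rw [hcomap, hcommon, Set.preimage_empty]⟩⟩
  · obtain ⟨W, hWS, hW⟩ := Finset.exists_subset_card_eq (not_le.1 himage).le
    obtain ⟨T, hTS, hTinj, hTW⟩ := Finset.exists_subset_injOn_image_eq_of_surjOn (f := π) S W
      fun b hb => by simpa using Finset.mem_image.1 (hWS hb)
    have hTcard : T.card = 1536 * x ^ 4 * w := by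
      rw [← hW, ← hTW, Finset.card_image_of_injOn hTinj]
    obtain ⟨u, hu, v, hv, hadj, hcommon⟩ := hA T hTcard hTinj
    exact ⟨u, hTS hu, v, hTS hv, .inl ⟨hadj, hcommon⟩⟩

theorem exists_cliqueFree_three_indepNum_lt {x w : ℕ} (hx : 2 ≤ x) (hw : 2 ^ 26 * x ^ 19 ≤ w)
    (hpow : w ^ 2 * x ^ 4 ≤ 2 ^ x ^ 4) :
    ∃ G : SimpleGraph (Fin (w ^ 2 * x ^ 4)), G.CliqueFree 3 ∧ G.indepNum < 1536 * x ^ 5 * w := by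
  have hfiber (b : Fin (w ^ 2)) :
      (Finset.univ.filter fun u : Fin (w ^ 2 * x ^ 4) => u.divNat = b).card ≤ x ^ 4 := by
    refine (Finset.card_le_card_of_injOn (t := Finset.univ) Fin.modNat
      (fun _ _ => Finset.mem_coe.2 (Finset.mem_univ _)) fun u hu v hv huv => ?_).trans_eq (by simp)
    exact finProdFinEquiv.symm.injective <| Prod.ext
      ((Finset.mem_filter.1 hu).2.trans (Finset.mem_filter.1 hv).2.symm) huv
  obtain ⟨G, hG, hS⟩ := exists_cliqueFree_three_forall_exists_adj (by simp) (by simp) hx hw hpow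
    hfiber
  refine ⟨G, hG, not_le.1 fun hle => ?_⟩
  obtain ⟨I, hI⟩ := G.exists_isNIndepSet_indepNum
  obtain ⟨S, hSI, hScard⟩ := Finset.exists_subset_card_eq (hle.trans_eq hI.card_eq.symm)
  obtain ⟨u, hu, v, hv, hadj⟩ := hS S hScard
  exact hI.isIndepSet (hSI hu) (hSI hv) hadj.ne hadj

end MixedSampling

section Copies

variable {ι V : Type*} {G : SimpleGraph V}

open Classical in
/-- The coloring of the complete graph on `ι × V` with a copy of `G` in red on each fiber
`{i} × V`, the complement of `G` in blue there, and all edges between different fibers yellow. -/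
noncomputable def copiesColoring (ι : Type*) (G : SimpleGraph V) : Sym2 (ι × V) → Col :=
  Sym2.lift ⟨fun u v => if u.1 = v.1 then if G.Adj u.2 v.2 then .r else .b else .y,
    fun u v => by simp only [eq_comm (a := u.1), G.adj_comm u.2]⟩

theorem colorGraph_copiesColoring_r_adj {u v : ι × V} :
    (colorGraph (copiesColoring ι G) .r).Adj u v ↔ u.1 = v.1 ∧ G.Adj u.2 v.2 := by
  simp only [colorGraph_adj, copiesColoring, Sym2.lift_mk]
  split_ifs with h hG
  · simpa [h, hG] using fun e : u = v => hG.ne (congrArg Prod.snd e)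
  · simp [hG]
  · simp [h]

theorem colorGraph_copiesColoring_b_adj {u v : ι × V} :
    (colorGraph (copiesColoring ι G) .b).Adj u v ↔ u.1 = v.1 ∧ Gᶜ.Adj u.2 v.2 := by
  simp only [colorGraph_adj, copiesColoring, Sym2.lift_mk, SimpleGraph.compl_adj, ne_eq,
    Prod.ext_iff (x := u)]
  split_ifs with h hG
  · simp [hG]
  · simp [h, hG]
  · simp [h]

theorem colorGraph_copiesColoring_y_adj {u v : ι × V} :
    (colorGraph (copiesColoring ι G) .y).Adj u v ↔ u.1 ≠ v.1 := by
  simp only [colorGraph_adj, copiesColoring, Sym2.lift_mk, ne_eq, Prod.ext_iff (x := u)]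
  split_ifs with h <;> simp [h]

theorem colorGraph_copiesColoring_r_cliqueFree_three (hG : G.CliqueFree 3) :
    (colorGraph (copiesColoring ι G) .r).CliqueFree 3 := by
  simp only [cliqueFree_three_iff, colorGraph_copiesColoring_r_adj] at hG ⊢
  exact fun u v w huv hvw huw => hG _ _ _ huv.2 hvw.2 huw.2

theorem rainbowFree_copiesColoring : RainbowFree (copiesColoring ι G) := by
  intro u v w
  simp only [copiesColoring, Sym2.lift_mk]
  grind

theorem indepNum_le_card_mul_of_forall_adj [Finite ι] [Finite V] {H : SimpleGraph (ι × V)}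
    (h : ∀ i u v, G.Adj u v → H.Adj (i, u) (i, v)) : H.indepNum ≤ Nat.card ι * G.indepNum := by
  classical
  have := Fintype.ofFinite ι
  obtain ⟨S, hS⟩ := H.exists_isNIndepSet_indepNum
  have hfiber (i : ι) : (S.filter fun u => u.1 = i).card ≤ G.indepNum := by
    have hfst (u : S.filter fun u => u.1 = i) : (u : ι × V) ∈ S ∧ (u : ι × V).1 = i :=
      Finset.mem_filter.1 u.2
    rw [← Nat.card_eq_finsetCard]
    refine card_le_indepNum_of_forall_not_adj (f := fun u => (u : ι × V).2)
      (fun u v huv => Subtype.ext (Prod.ext ((hfst u).2.trans (hfst v).2.symm) huv))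
      fun u v huv => ?_
    have hadj : H.Adj (u : ι × V) v := by
      convert h i _ _ huv
      exacts [(hfst u).2, (hfst v).2]
    exact hS.isIndepSet (hfst u).1 (hfst v).1 hadj.ne hadj
  rw [← hS.card_eq, Nat.card_eq_fintype_card, mul_comm]
  exact Finset.card_le_mul_card_image_of_maps_to (fun _ _ => Finset.mem_univ _) _
    fun i _ => hfiber i

theorem indepNum_compl_le_two [Finite V] (hG : G.CliqueFree 3) : Gᶜ.indepNum ≤ 2 := by
  obtain ⟨S, hS⟩ := G.exists_isNClique_cliqueNum
  rw [SimpleGraph.indepNum_compl]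
  by_contra! h
  exact hG.mono h S hS

theorem indepNum_colorGraph_copiesColoring_r_le [Finite ι] [Finite V] :
    (colorGraph (copiesColoring ι G) .r).indepNum ≤ Nat.card ι * G.indepNum :=
  indepNum_le_card_mul_of_forall_adj fun _ _ _ h => colorGraph_copiesColoring_r_adj.2 ⟨rfl, h⟩

theorem indepNum_colorGraph_copiesColoring_b_le [Finite ι] [Finite V] (hG : G.CliqueFree 3) :
    (colorGraph (copiesColoring ι G) .b).indepNum ≤ Nat.card ι * 2 :=
  (indepNum_le_card_mul_of_forall_adj fun _ _ _ h =>
    colorGraph_copiesColoring_b_adj.2 ⟨rfl, h⟩).trans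
      (Nat.mul_le_mul_left _ (indepNum_compl_le_two hG))

theorem indepNum_colorGraph_copiesColoring_y_le [Finite ι] [Finite V] :
    (colorGraph (copiesColoring ι G) .y).indepNum ≤ Nat.card V := by
  obtain ⟨S, hS⟩ := (colorGraph (copiesColoring ι G) .y).exists_isNIndepSet_indepNum
  rw [← hS.card_eq, ← Nat.card_eq_finsetCard]
  refine Nat.card_le_card_of_injective (fun u : S => (u : ι × V).2) fun u v huv => ?_
  by_contra hne
  refine hS.isIndepSet u.2 v.2 (Subtype.coe_ne_coe.2 hne) (colorGraph_copiesColoring_y_adj.2 ?_)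
  exact fun hfst => hne (Subtype.ext (Prod.ext hfst huv))

theorem h2n_le_of_cliqueFree_three {n k m t : ℕ} {G : SimpleGraph (Fin m)} (hG : G.CliqueFree 3)
    (hind : G.indepNum ≤ t) (ht : 2 ≤ t) (hm : m ≤ k * t) (hn : n ≤ k * m) :
    h2n n {Prrr, Prby} ≤ k * t := by
  let f : Fin n ↪ Fin k × Fin m := (Fin.castLEEmb hn).trans finProdFinEquiv.symm.toEmbedding
  let c : Coloring n := ⟨fun u v => copiesColoring (Fin k) G s(f u, f v),
    fun u v => congrArg _ Sym2.eq_swap⟩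
  have hcolor (x : Col) :
      colorGraph c.onSym2 x = (colorGraph (copiesColoring (Fin k) G) x).comap f := by
    rw [← colorGraph_comp_map]
    exact congrArg (colorGraph · x) (funext (Sym2.ind fun _ _ => rfl))
  have havoid : Avoids c {Prrr, Prby} := by
    refine avoids_iff.2 ⟨?_, fun u v w => rainbowFree_copiesColoring (f u) (f v) (f w)⟩
    rw [hcolor]
    exact (colorGraph_copiesColoring_r_cliqueFree_three hG).comap
      ⟨(SimpleGraph.Embedding.comap f _).toCopy⟩
  refine (h2n_le_of_avoids havoid).trans (h2_le_iff.2 fun x => ?_)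
  rw [hcolor]
  refine (indepNum_comap_le _ f).trans ?_
  cases x with
  | r =>
    refine indepNum_colorGraph_copiesColoring_r_le.trans ?_
    simpa only [Nat.card_fin] using Nat.mul_le_mul_left k hind
  | b =>
    refine (indepNum_colorGraph_copiesColoring_b_le hG).trans ?_
    simpa only [Nat.card_fin] using Nat.mul_le_mul_left k ht
  | y => exact indepNum_colorGraph_copiesColoring_y_le.trans ((Nat.card_fin m).trans_le hm)

end Copies

section UpperBound

theorem h2n_le_mul_sq_mul_pow {n k x : ℕ} (hx : 2 ≤ x) (hk : 2 ^ 26 * x ^ 18 ≤ k)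
    (hpow : k ^ 2 * x ^ 6 ≤ 2 ^ x ^ 4) (hn : n ≤ k ^ 3 * x ^ 6) :
    h2n n {Prrr, Prby} ≤ 1536 * k ^ 2 * x ^ 6 := by
  have hx₀ : 0 < x := two_pos.trans_le hx
  have hk₀ : 0 < k := (mul_pos (by norm_num) (pow_pos hx₀ 18)).trans_le hk
  obtain ⟨G, hG, hind⟩ := exists_cliqueFree_three_indepNum_lt (w := k * x) hx
    (by nlinarith [Nat.mul_le_mul_right x hk]) ((by ring : _ = _).trans_le hpow)
  have ht : 2 ≤ 1536 * x ^ 5 * (k * x) := by nlinarith [show 0 < x ^ 5 * (k * x) by positivity]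
  have hm : (k * x) ^ 2 * x ^ 4 ≤ k * (1536 * x ^ 5 * (k * x)) := by
    nlinarith [Nat.zero_le (k ^ 2 * x ^ 6)]
  refine (h2n_le_of_cliqueFree_three hG hind.le ht hm (hn.trans_eq (by ring))).trans_eq ?_
  ring

theorem exists_pow_three_mul_pow_six_eq {n x : ℝ} (hn : 0 ≤ n) (hx : 0 < x) :
    ∃ q : ℝ, 0 ≤ q ∧ q ^ 3 * x ^ 6 = n ∧ q ^ 2 * x ^ 4 = n ^ (2 / 3 : ℝ) := by
  refine ⟨n ^ (1 / 3 : ℝ) / x ^ 2, by positivity, ?_, ?_⟩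
  · have hcube : (n ^ (1 / 3 : ℝ)) ^ 3 = n := by
      rw [← Real.rpow_mul_natCast hn]
      norm_num
    field_simp
    exact hcube
  · have hsq : (n ^ (1 / 3 : ℝ)) ^ 2 = n ^ (2 / 3 : ℝ) := by
      rw [← Real.rpow_mul_natCast hn]
      norm_num
    field_simp
    exact hsq

theorem h2n_le_rpow_two_thirds_mul_sq {n x : ℕ} (hx : 2 ≤ x) (hxn : 2 ^ 78 * x ^ 60 ≤ n)
    (hn : n ≤ 2 ^ x ^ 4) :
    (h2n n {Prrr, Prby} : ℝ) ≤ 6144 * (n : ℝ) ^ (2 / 3 : ℝ) * x ^ 2 := by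
  have hx₀ : (0 : ℝ) < x := mod_cast two_pos.trans_le hx
  have hx₁ : (1 : ℝ) ≤ (x : ℝ) ^ 18 := one_le_pow₀ (mod_cast one_le_two.trans hx)
  obtain ⟨q, hq₀, hqn, hqn'⟩ := exists_pow_three_mul_pow_six_eq n.cast_nonneg hx₀
  have hq : (2 : ℝ) ^ 26 * x ^ 18 ≤ q := by
    refine le_of_pow_le_pow_left₀ three_ne_zero hq₀ (le_of_mul_le_mul_right ?_ (pow_pos hx₀ 6))
    rw [hqn]
    calc ((2 : ℝ) ^ 26 * x ^ 18) ^ 3 * (x : ℝ) ^ 6 = 2 ^ 78 * (x : ℝ) ^ 60 := by ring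
      _ ≤ (n : ℝ) := mod_cast hxn
  have hqk : q ≤ ⌈q⌉₊ := Nat.le_ceil q
  have hkq : (⌈q⌉₊ : ℝ) ≤ 2 * q := by linarith [Nat.ceil_lt_add_one hq₀]
  have hk : 2 ^ 26 * x ^ 18 ≤ ⌈q⌉₊ := mod_cast hq.trans hqk
  have hkn : ⌈q⌉₊ ^ 2 * x ^ 6 ≤ n := by
    have : (⌈q⌉₊ : ℝ) ^ 2 * x ^ 6 ≤ n := by
      calc (⌈q⌉₊ : ℝ) ^ 2 * x ^ 6 ≤ (2 * q) ^ 2 * x ^ 6 := by gcongr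
        _ = 4 * q ^ 2 * x ^ 6 := by ring
        _ ≤ q * q ^ 2 * x ^ 6 := by gcongr; linarith
        _ = n := by rw [← hqn]; ring
    exact_mod_cast this
  have hnk : n ≤ ⌈q⌉₊ ^ 3 * x ^ 6 := by
    have : (n : ℝ) ≤ (⌈q⌉₊ : ℝ) ^ 3 * x ^ 6 := by rw [← hqn]; gcongr
    exact_mod_cast this
  calc (h2n n {Prrr, Prby} : ℝ) ≤ 1536 * (⌈q⌉₊ : ℝ) ^ 2 * x ^ 6 :=
        mod_cast h2n_le_mul_sq_mul_pow hx hk (hkn.trans hn) hnk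
    _ ≤ 1536 * (2 * q) ^ 2 * x ^ 6 := by gcongr
    _ = 6144 * (q ^ 2 * x ^ 4) * x ^ 2 := by ring
    _ = 6144 * (n : ℝ) ^ (2 / 3 : ℝ) * x ^ 2 := by rw [hqn']

theorem eventually_mul_logb_pow_le (b C : ℝ) (k : ℕ) :
    ∀ᶠ n : ℕ in Filter.atTop, C * Real.logb b n ^ k ≤ n := by
  have h : (fun z => C * Real.logb b z ^ k) =o[Filter.atTop] (id : ℝ → ℝ) := by
    simp only [Real.logb, div_eq_inv_mul, mul_pow]
    exact (Real.isLittleO_pow_log_id_atTop.const_mul_left _).const_mul_left _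
  filter_upwards [tendsto_natCast_atTop_atTop.eventually (h.bound one_pos)] with n hn
  simpa using (le_abs_self _).trans hn

theorem eventually_h2n_le : ∀ᶠ n : ℕ in Filter.atTop,
    (h2n n {Prrr, Prby} : ℝ) ≤ 24576 * (n : ℝ) ^ (2 / 3 : ℝ) * √(Real.logb 2 n) := by
  filter_upwards [eventually_mul_logb_pow_le 2 (2 ^ 138) 15, Filter.eventually_ge_atTop 3]
    with n hlog hn₃
  set l := Real.logb 2 n
  have hn₀ : (0 : ℝ) < n := by positivity
  have hl : 1 < l := by
    rw [Real.lt_logb_iff_rpow_lt one_lt_two hn₀, Real.rpow_one]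
    exact_mod_cast hn₃
  have hsqrt : 1 < √(√l) := by simpa [Real.lt_sqrt] using hl
  have hfourth : √(√l) ^ 4 = l := by
    rw [show 4 = 2 * 2 from rfl, pow_mul, Real.sq_sqrt l.sqrt_nonneg, Real.sq_sqrt (by linarith)]
  set x := ⌈√(√l)⌉₊
  have hx_ge : √(√l) ≤ x := Nat.le_ceil _
  have hx_le : (x : ℝ) ≤ 2 * √(√l) := by linarith [Nat.ceil_lt_add_one (√l).sqrt_nonneg]
  have hx : 2 ≤ x := Nat.lt_ceil.2 (mod_cast hsqrt)
  have hxn : 2 ^ 78 * x ^ 60 ≤ n := by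
    have : (2 : ℝ) ^ 78 * x ^ 60 ≤ n := by
      calc (2 : ℝ) ^ 78 * x ^ 60 ≤ 2 ^ 78 * (2 * √(√l)) ^ 60 := by gcongr
        _ = 2 ^ 138 * (√(√l) ^ 4) ^ 15 := by ring
        _ ≤ n := by rwa [hfourth]
    exact_mod_cast this
  have hn : n ≤ 2 ^ x ^ 4 := by
    have hlx : l ≤ (x ^ 4 : ℕ) := by
      rw [← hfourth]
      push_cast
      gcongr
    rw [Real.logb_le_iff_le_rpow one_lt_two hn₀, Real.rpow_natCast] at hlx
    exact_mod_cast hlx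
  calc (h2n n {Prrr, Prby} : ℝ) ≤ 6144 * (n : ℝ) ^ (2 / 3 : ℝ) * x ^ 2 :=
        h2n_le_rpow_two_thirds_mul_sq hx hxn hn
    _ ≤ 6144 * (n : ℝ) ^ (2 / 3 : ℝ) * (2 * √(√l)) ^ 2 := by gcongr
    _ = 24576 * (n : ℝ) ^ (2 / 3 : ℝ) * √l := by
      rw [mul_pow, Real.sq_sqrt l.sqrt_nonneg]
      ring

end UpperBound

theorem div_logb_rpow_le_self {a b z s : ℝ} (ha : 0 ≤ a) (hb : 1 < b) (hz : b ≤ z) (hs : 0 ≤ s) :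
    a / Real.logb b z ^ s ≤ a := by
  refine div_le_self ha (Real.one_le_rpow ?_ hs)
  rwa [Real.le_logb_iff_rpow_le hb (by linarith), Real.rpow_one]

theorem stmt7_general :
    ∃ C1 C2 : ℝ, 0 < C1 ∧ 0 < C2 ∧ ∃ n0 : ℕ, ∀ n : ℕ, n0 ≤ n →
      C1 * (n : ℝ) ^ ((2 : ℝ) / 3) ≤ (h2n n {Prrr, Prby} : ℝ) ∧
      (h2n n {Prrr, Prby} : ℝ)
          ≤ C2 * (n : ℝ) ^ ((2 : ℝ) / 3) * Real.sqrt (Real.logb 2 n) := by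
  obtain ⟨n0, h⟩ := Filter.eventually_atTop.1 eventually_h2n_le
  exact ⟨1 / 9, 24576, by norm_num, by norm_num, n0,
    fun n hn => ⟨rpow_two_thirds_le_h2n n, h n hn⟩⟩

theorem stmt7 :
    ∃ C1 C2 : ℝ, 0 < C1 ∧ 0 < C2 ∧ ∃ n0 : ℕ, ∀ n : ℕ, n0 ≤ n →
      C1 * (n : ℝ) ^ ((2 : ℝ) / 3) / Real.logb 2 n ^ ((3 : ℝ) / 2)
          ≤ (h2n n {Prrr, Prby} : ℝ) ∧
      (h2n n {Prrr, Prby} : ℝ)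
          ≤ C2 * (n : ℝ) ^ ((2 : ℝ) / 3) * Real.sqrt (Real.logb 2 n) := by
  obtain ⟨C1, C2, hC1, hC2, n0, h⟩ := stmt7_general
  exact ⟨C1, C2, hC1, hC2, max n0 2, fun n hn => (h n (le_of_max_le_left hn)).imp_left
    (div_logb_rpow_le_self (by positivity) one_lt_two (mod_cast le_of_max_le_right hn)
      (by norm_num)).trans⟩
end

section
/- Let H = {rrb, bby, yyr} (the patterns: a triangle with two red edges and one blue edge, a triangle with two blue edges and one yellow edge, and a triangle with two yellow edges and one red edge). Then h_2(n, H) = ⌈n/2⌉ for every integer n ≥ 3 with n ≠ 7, and h_2(7, H) = 3. -/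
/-!
The forbidden patterns are `x x x⁺`, where `x⁺` follows `x` in the cyclic order `r → b → y → r` of
the colors. Let `N x` be the set of vertices joined to a fixed vertex `v` by the color `x`. Then
`x⁺` does not occur inside `N x`, and `x` does not occur between `N x` and `N x⁺`.

Lower bound: suppose that every set missing a color has fewer than `k` vertices, where
`2 * k ≤ n + 1`. Since `N x ∪ {v}` misses `x⁺`, all degrees are at most `k - 2`, so any two of the
three neighborhoods have at least `k` vertices together and their union shows all three colors.
This forces an edge of color `x` into every `N x`, then a vertex `u` of `N x` all of whose edges to
`N x⁺` have color `x⁺⁺`, and hence makes every `N x` monochromatic of color `x`. Now replacing `u`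
by `v` in `N x ∪ N x⁺` gives a set of at least `k` vertices missing `x⁺⁺`. The first step is a count
that needs at least five vertices in `N x ∪ N x⁺`; it fails only for `k = 4`, `n = 7`, where the
heptagon coloring has no set of four vertices missing a color.
-/

/-- The cyclic successor `r → b → y → r`. The forbidden patterns are the `x x x.next`, so that a
statement about an arbitrary color `x` covers its three rotations at once. -/
def Col.next : Col → Col
  | r => b
  | b => y
  | y => r

namespace Col

@[simp]
theorem next_next_next (x : Col) : x.next.next.next = x := by cases x <;> rfl

@[simp]
theorem next_ne_self (x : Col) : x.next ≠ x := by cases x <;> decide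

@[simp]
theorem next_next_ne_self (x : Col) : x.next.next ≠ x := by cases x <;> decide

theorem eq_or_eq_next_or_eq_next_next (x z : Col) : z = x ∨ z = x.next ∨ z = x.next.next := by
  cases x <;> cases z <;> decide

theorem eq_next_of_ne {x z : Col} (h : z ≠ x) (h' : z ≠ x.next.next) : z = x.next :=
  ((x.eq_or_eq_next_or_eq_next_next z).resolve_left h).resolve_right h'

theorem eq_next_next_of_ne {x z : Col} (h : z ≠ x) (h' : z ≠ x.next) : z = x.next.next :=
  ((x.eq_or_eq_next_or_eq_next_next z).resolve_left h).resolve_left h'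

theorem eq_of_ne_next {x z : Col} (h : z ≠ x.next) (h' : z ≠ x.next.next) : z = x := by
  simpa using eq_next_next_of_ne h h'

end Col

theorem card_mul_card_le_card_add_card {α β : Type*} {A : Finset α} {B : Finset β}
    {r : α → β → Prop} (hA : ∀ a ∈ A, ∀ b ∈ B, ∀ b' ∈ B, ¬ r a b → ¬ r a b' → b = b')
    (hB : ∀ a ∈ A, ∀ a' ∈ A, ∀ b ∈ B, r a b → r a' b → a = a') :
    A.card * B.card ≤ A.card + B.card := by
  classical
  have hpos : {e ∈ A ×ˢ B | r e.1 e.2}.card ≤ B.card := by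
    refine Finset.card_le_card_of_injOn Prod.snd (fun e he => ?_) ?_
    · exact (Finset.mem_product.1 (Finset.mem_filter.1 he).1).2
    · rintro ⟨a, b⟩ he ⟨a', _⟩ he' rfl
      simp only [Finset.mem_coe, Finset.mem_filter, Finset.mem_product] at he he'
      rw [hB a he.1.1 a' he'.1.1 b he.1.2 he.2 he'.2]
  have hneg : {e ∈ A ×ˢ B | ¬ r e.1 e.2}.card ≤ A.card := by
    refine Finset.card_le_card_of_injOn Prod.fst (fun e he => ?_) ?_
    · exact (Finset.mem_product.1 (Finset.mem_filter.1 he).1).1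
    · rintro ⟨a, b⟩ he ⟨_, b'⟩ he' rfl
      simp only [Finset.mem_coe, Finset.mem_filter, Finset.mem_product] at he he'
      rw [hA a he.1.1 b he.1.2 b' he'.1.2 he.2 he'.2]
  calc A.card * B.card = (A ×ˢ B).card := (Finset.card_product A B).symm
    _ = {e ∈ A ×ˢ B | r e.1 e.2}.card + {e ∈ A ×ˢ B | ¬ r e.1 e.2}.card :=
      (Finset.card_filter_add_card_filter_not _).symm
    _ ≤ A.card + B.card := by omega

section Cliques

variable {V : Type*}

/-- The color `x` does not occur on the edges inside `S`; the sets counted by `h2` are those that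
miss some color. -/
def MissesColor (f : V → V → Col) (x : Col) (S : Set V) : Prop :=
  S.Pairwise fun u w => f u w ≠ x

/-- All edges inside `S` have color `x`: the neighborhoods of a vertex turn out to be such cliques
in a coloring violating the lower bound. -/
def Monochromatic (f : V → V → Col) (x : Col) (S : Set V) : Prop :=
  S.Pairwise fun u w => f u w = x

theorem Monochromatic.missesColor {f : V → V → Col} {x z : Col} {S : Set V}
    (h : Monochromatic f x S) (hxz : x ≠ z) : MissesColor f z S :=
  h.imp fun _ _ huw => huw ▸ hxz

theorem MissesColor.union {f : V → V → Col} {x : Col} {S T : Set V}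
    (hsymm : ∀ u w, f u w = f w u) (hS : MissesColor f x S) (hT : MissesColor f x T)
    (hST : ∀ u ∈ S, ∀ w ∈ T, f u w ≠ x) : MissesColor f x (S ∪ T) := by
  have : Std.Symm fun u w => f u w ≠ x := ⟨fun u w h => (hsymm w u).trans_ne h⟩
  exact Set.pairwise_union_of_symm.2 ⟨hS, hT, fun u hu w hw _ => hST u hu w hw⟩

theorem MissesColor.insert {f : V → V → Col} {x : Col} {S : Set V} {v : V}
    (hsymm : ∀ u w, f u w = f w u) (hS : MissesColor f x S) (hv : ∀ u ∈ S, f v u ≠ x) :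
    MissesColor f x (insert v S) := by
  have : Std.Symm fun u w => f u w ≠ x := ⟨fun u w h => (hsymm w u).trans_ne h⟩
  exact Set.pairwise_insert_of_symm.2 ⟨hS, fun u hu _ => hv u hu⟩

/-- An edge-coloring of the complete graph on `V` with no triangle of pattern `x x x.next`.
The diagonal values `f u u` are meaningless. -/
structure CyclicFree (f : V → V → Col) : Prop where
  symm : ∀ u v, f u v = f v u
  ne_next : ∀ {x u v w}, u ≠ v → v ≠ w → u ≠ w → f u v = x → f v w = x → f u w ≠ x.next

end Cliques

section Neighborhoods

variable {V : Type*} [Fintype V] [DecidableEq V]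

/-- The set of vertices joined to `v` by an edge of color `x`; as `f v v` is arbitrary, `v` has to
be excluded explicitly. -/
def colorNbhd (f : V → V → Col) (v : V) (x : Col) : Finset V :=
  {u | u ≠ v ∧ f v u = x}

variable {f : V → V → Col} {v u w w' : V} {x z : Col}

theorem mem_colorNbhd : u ∈ colorNbhd f v x ↔ u ≠ v ∧ f v u = x := by
  simp [colorNbhd]

theorem notMem_colorNbhd_self : v ∉ colorNbhd f v x := by
  simp [mem_colorNbhd]

theorem disjoint_colorNbhd (hxz : x ≠ z) : Disjoint (colorNbhd f v x) (colorNbhd f v z) :=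
  Finset.disjoint_left.2 fun _ hx hz =>
    hxz ((mem_colorNbhd.1 hx).2.symm.trans (mem_colorNbhd.1 hz).2)

theorem ne_of_mem_colorNbhd_next (hu : u ∈ colorNbhd f v x) (hw : w ∈ colorNbhd f v x.next) :
    u ≠ w :=
  Finset.disjoint_iff_ne.1 (disjoint_colorNbhd x.next_ne_self.symm) u hu w hw

theorem card_colorNbhd_union_colorNbhd_next (f : V → V → Col) (v : V) (x : Col) :
    (colorNbhd f v x ∪ colorNbhd f v x.next).card =
      (colorNbhd f v x).card + (colorNbhd f v x.next).card :=
  Finset.card_union_of_disjoint (disjoint_colorNbhd x.next_ne_self.symm)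

theorem sum_card_colorNbhd (f : V → V → Col) (v : V) (x : Col) :
    (colorNbhd f v x).card + (colorNbhd f v x.next).card + (colorNbhd f v x.next.next).card + 1 =
      Fintype.card V := by
  have hdisj : Disjoint (colorNbhd f v x ∪ colorNbhd f v x.next) (colorNbhd f v x.next.next) :=
    Finset.disjoint_union_left.2 ⟨disjoint_colorNbhd x.next_next_ne_self.symm,
      disjoint_colorNbhd x.next.next_ne_self.symm⟩
  have hunion : colorNbhd f v x ∪ colorNbhd f v x.next ∪ colorNbhd f v x.next.next =
      Finset.univ.erase v := by
    ext u
    have := x.eq_or_eq_next_or_eq_next_next (f v u)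
    simp only [Finset.mem_union, mem_colorNbhd, Finset.mem_erase, Finset.mem_univ]
    tauto
  rw [← card_colorNbhd_union_colorNbhd_next, ← Finset.card_union_of_disjoint hdisj, hunion,
    Finset.card_erase_add_one (Finset.mem_univ v), Finset.card_univ]

namespace CyclicFree

theorem missesColor_colorNbhd (hf : CyclicFree f) : MissesColor f x.next (colorNbhd f v x) := by
  intro u hu w hw huw
  obtain ⟨huv, hvu⟩ := mem_colorNbhd.1 hu
  obtain ⟨hwv, hvw⟩ := mem_colorNbhd.1 hw
  exact hf.ne_next huv hwv.symm huw (hf.symm u v ▸ hvu) hvw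

theorem missesColor_insert_colorNbhd (hf : CyclicFree f) :
    MissesColor f x.next (insert v (colorNbhd f v x)) :=
  hf.missesColor_colorNbhd.insert hf.symm fun _ hu =>
    (mem_colorNbhd.1 hu).2 ▸ x.next_ne_self.symm

theorem cross_ne (hf : CyclicFree f) (hu : u ∈ colorNbhd f v x)
    (hw : w ∈ colorNbhd f v x.next) : f u w ≠ x := by
  obtain ⟨huv, hvu⟩ := mem_colorNbhd.1 hu
  obtain ⟨hwv, hvw⟩ := mem_colorNbhd.1 hw
  intro huw
  exact hf.ne_next huv.symm (ne_of_mem_colorNbhd_next hu hw) hwv.symm hvu huw hvw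

theorem ne_of_cross_eq_next_next (hf : CyclicFree f) (hu : u ∈ colorNbhd f v x)
    (hw : w ∈ colorNbhd f v x.next) (hw' : w' ∈ colorNbhd f v x.next) (hww' : w ≠ w')
    (huw : f u w = x.next.next) (huw' : f u w' = x.next.next) : f w w' ≠ x := by
  simpa using hf.ne_next (ne_of_mem_colorNbhd_next hu hw).symm (ne_of_mem_colorNbhd_next hu hw')
    hww' (hf.symm u w ▸ huw) huw'

theorem ne_next_next_of_cross_eq_next {u' : V} (hf : CyclicFree f) (hu : u ∈ colorNbhd f v x)
    (hu' : u' ∈ colorNbhd f v x) (hw : w ∈ colorNbhd f v x.next) (huu' : u ≠ u')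
    (huw : f u w = x.next) (hu'w : f u' w = x.next) : f u u' ≠ x.next.next :=
  hf.ne_next (ne_of_mem_colorNbhd_next hu hw) (ne_of_mem_colorNbhd_next hu' hw).symm huu' huw
    (hf.symm u' w ▸ hu'w)

theorem eq_of_cross_ne (hf : CyclicFree f) (hu : u ∈ colorNbhd f v x)
    (hw : w ∈ colorNbhd f v x.next) (hw' : w' ∈ colorNbhd f v x.next)
    (h : f u w ≠ f u w') : f w w' = x := by
  have hww' : w ≠ w' := fun h' => h (h' ▸ rfl)
  refine Col.eq_of_ne_next (fun hnext => ?_) (hf.missesColor_colorNbhd hw hw' hww')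
  have huw_ne := ne_of_mem_colorNbhd_next hu hw
  have huw'_ne := ne_of_mem_colorNbhd_next hu hw'
  by_cases huw : f u w = x.next
  · have huw' : f u w' = x.next.next := Col.eq_next_next_of_ne (hf.cross_ne hu hw') (huw ▸ h.symm)
    exact hf.ne_next huw_ne hww' huw'_ne huw hnext huw'
  · have huw : f u w = x.next.next := Col.eq_next_next_of_ne (hf.cross_ne hu hw) huw
    have huw' : f u w' = x.next := Col.eq_next_of_ne (hf.cross_ne hu hw') (huw ▸ h.symm)
    exact hf.ne_next huw'_ne hww'.symm huw_ne huw' (hf.symm w w' ▸ hnext) huw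

theorem monochromatic_of_cross_ne (hf : CyclicFree f) (hu : u ∈ colorNbhd f v x)
    (hw : w ∈ colorNbhd f v x.next) (hw' : w' ∈ colorNbhd f v x.next) (h : f u w ≠ f u w') :
    Monochromatic f x (colorNbhd f v x.next) := by
  intro a ha b hb hab
  -- If `f u a = f u b`, then `w` or `w'` lies on the other side of `u`, and the two `x`-edges that
  -- join it to `a` and `b` leave only `x` for the edge `a b`.
  by_cases hne : f u a = f u b
  · obtain ⟨e, he, hea⟩ : ∃ e ∈ colorNbhd f v x.next, f u a ≠ f u e := by
      by_cases hwa : f u a = f u w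
      · exact ⟨w', hw', hwa ▸ h⟩
      · exact ⟨w, hw, hwa⟩
    have hae : f a e = x := hf.eq_of_cross_ne hu ha he hea
    have heb : f e b = x := hf.eq_of_cross_ne hu he hb (hne ▸ hea.symm)
    have hae_ne : a ≠ e := fun h' => hea (h' ▸ rfl)
    have heb_ne : e ≠ b := fun h' => hea (h' ▸ hne)
    exact Col.eq_of_ne_next (hf.ne_next hae_ne heb_ne hab hae heb)
      (hf.missesColor_colorNbhd ha hb hab)
  · exact hf.eq_of_cross_ne hu ha hb hne

theorem missesColor_union_of_not_monochromatic (hf : CyclicFree f)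
    (hcard : 1 < (colorNbhd f v x).card)
    (hR : Monochromatic f x.next.next (colorNbhd f v x))
    (hB : ¬ Monochromatic f x (colorNbhd f v x.next)) :
    MissesColor f x ↑(colorNbhd f v x ∪ colorNbhd f v x.next) := by
  rw [Finset.coe_union]
  refine (hR.missesColor x.next_next_ne_self).union hf.symm ?_
    fun u hu w hw => hf.cross_ne hu hw
  intro w hw w' hw' hww' hx
  have cross_eq_next : ∀ u ∈ colorNbhd f v x, f u w = x.next := fun u hu =>
    Col.eq_next_of_ne (hf.cross_ne hu hw) fun huw => by
      by_cases huw' : f u w = f u w'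
      · exact hf.ne_of_cross_eq_next_next hu hw hw' hww' huw (huw' ▸ huw) hx
      · exact hB (hf.monochromatic_of_cross_ne hu hw hw' huw')
  obtain ⟨u, hu, u', hu', huu'⟩ := Finset.one_lt_card.1 hcard
  exact hf.ne_next_next_of_cross_eq_next hu hu' hw huu' (cross_eq_next u hu)
    (cross_eq_next u' hu') (hR hu hu' huu')

theorem card_mul_card_le_of_monochromatic (hf : CyclicFree f)
    (hR : Monochromatic f x.next.next (colorNbhd f v x))
    (hB : Monochromatic f x (colorNbhd f v x.next)) :
    (colorNbhd f v x).card * (colorNbhd f v x.next).card ≤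
      (colorNbhd f v x).card + (colorNbhd f v x.next).card := by
  refine card_mul_card_le_card_add_card (r := fun u w => f u w = x.next) ?_ ?_
  · intro u hu w hw w' hw' huw huw'
    by_contra hww'
    exact hf.ne_of_cross_eq_next_next hu hw hw' hww'
      (Col.eq_next_next_of_ne (hf.cross_ne hu hw) huw)
      (Col.eq_next_next_of_ne (hf.cross_ne hu hw') huw') (hB hw hw' hww')
  · intro u hu u' hu' w hw huw hu'w
    by_contra huu'
    exact hf.ne_next_next_of_cross_eq_next hu hu' hw huu' huw hu'w (hR hu hu' huu')

theorem missesColor_union_of_monochromatic (hf : CyclicFree f)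
    (hRcard : 2 ≤ (colorNbhd f v x).card) (hBcard : 2 ≤ (colorNbhd f v x.next).card)
    (hcard : 5 ≤ (colorNbhd f v x).card + (colorNbhd f v x.next).card)
    (hR : Monochromatic f x.next.next (colorNbhd f v x)) :
    MissesColor f x ↑(colorNbhd f v x ∪ colorNbhd f v x.next) := by
  refine hf.missesColor_union_of_not_monochromatic hRcard hR fun hB => ?_
  have := hf.card_mul_card_le_of_monochromatic hR hB
  nlinarith

theorem exists_forall_cross_eq_next_next (hf : CyclicFree f)
    (hB : ¬ Monochromatic f x (colorNbhd f v x.next))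
    (hRB : ¬ MissesColor f x.next.next ↑(colorNbhd f v x ∪ colorNbhd f v x.next)) :
    ∃ u ∈ colorNbhd f v x, ∀ w ∈ colorNbhd f v x.next, f u w = x.next.next := by
  by_contra! hcon
  have cross_eq_next : ∀ u ∈ colorNbhd f v x, ∀ w ∈ colorNbhd f v x.next, f u w = x.next := by
    intro u hu w hw
    obtain ⟨w', hw', huw'⟩ := hcon u hu
    by_cases heq : f u w = f u w'
    · exact Col.eq_next_of_ne (hf.cross_ne hu hw) (heq ▸ huw')
    · exact absurd (hf.monochromatic_of_cross_ne hu hw hw' heq) hB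
  refine hRB ?_
  rw [Finset.coe_union]
  refine MissesColor.union hf.symm ?_ hf.missesColor_colorNbhd fun u hu w hw =>
    cross_eq_next u hu w hw ▸ x.next.next_ne_self.symm
  intro u hu u' hu' huu'
  obtain ⟨w, hw, -⟩ := hcon u hu
  exact hf.ne_next_next_of_cross_eq_next hu hu' hw huu' (cross_eq_next u hu w hw)
    (cross_eq_next u' hu' w hw)

theorem monochromatic_of_forall_cross_eq_next_next (hf : CyclicFree f)
    (hu : u ∈ colorNbhd f v x)
    (hcross : ∀ w ∈ colorNbhd f v x.next, f u w = x.next.next) :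
    Monochromatic f x.next (colorNbhd f v x.next) := fun w hw w' hw' hww' =>
  Col.eq_next_of_ne
    (hf.ne_of_cross_eq_next_next hu hw hw' hww' (hcross w hw) (hcross w' hw'))
    (hf.missesColor_colorNbhd hw hw' hww')

theorem missesColor_insert_erase_union (hf : CyclicFree f) (hu : u ∈ colorNbhd f v x)
    (hcross : ∀ w ∈ colorNbhd f v x.next, f u w = x.next.next)
    (hR : Monochromatic f x (colorNbhd f v x)) :
    MissesColor f x.next.next
      ↑(insert v ((colorNbhd f v x).erase u ∪ colorNbhd f v x.next)) := by
  rw [Finset.coe_insert, Finset.coe_union]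
  have herase : MissesColor f x.next.next ((colorNbhd f v x).erase u) :=
    (hR.missesColor x.next_next_ne_self.symm).mono (Finset.coe_subset.2 (Finset.erase_subset _ _))
  refine (herase.union hf.symm hf.missesColor_colorNbhd ?_).insert hf.symm ?_
  · intro u' hu' w hw hu'w
    obtain ⟨hne, hu'⟩ := Finset.mem_erase.1 hu'
    have hpath : f u' u ≠ x.next.next.next :=
      hf.ne_next (ne_of_mem_colorNbhd_next hu' hw) (ne_of_mem_colorNbhd_next hu hw).symm hne hu'w
        (hf.symm u w ▸ hcross w hw)
    exact hpath (by simpa using hR hu' hu hne)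
  · rintro a (ha | ha)
    · rw [(mem_colorNbhd.1 (Finset.mem_of_mem_erase ha)).2]
      exact x.next_next_ne_self.symm
    · rw [(mem_colorNbhd.1 ha).2]
      exact x.next.next_ne_self.symm

theorem card_insert_erase_union (hu : u ∈ colorNbhd f v x) :
    (insert v ((colorNbhd f v x).erase u ∪ colorNbhd f v x.next)).card =
      (colorNbhd f v x).card + (colorNbhd f v x.next).card := by
  have hv : v ∉ (colorNbhd f v x).erase u ∪ colorNbhd f v x.next := by
    simp [mem_colorNbhd]
  have hdisj : Disjoint ((colorNbhd f v x).erase u) (colorNbhd f v x.next) :=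
    (disjoint_colorNbhd x.next_ne_self.symm).mono_left (Finset.erase_subset _ _)
  rw [Finset.card_insert_of_notMem hv, Finset.card_union_of_disjoint hdisj, add_right_comm,
    Finset.card_erase_add_one hu]

theorem exists_missesColor_of_le_card_colorNbhd (hf : CyclicFree f) {k : ℕ} (hk : 5 ≤ k)
    (hdeg : ∀ x, 2 ≤ (colorNbhd f v x).card)
    (hpair : ∀ x, k ≤ (colorNbhd f v x).card + (colorNbhd f v x.next).card) :
    ∃ (x : Col) (S : Finset V), MissesColor f x S ∧ k ≤ S.card := by
  by_contra! hsmall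
  have hunion (x z : Col) : ¬ MissesColor f z ↑(colorNbhd f v x ∪ colorNbhd f v x.next) :=
    fun h => (hsmall z _ h).not_ge (card_colorNbhd_union_colorNbhd_next f v x ▸ hpair x)
  have hnot (x : Col) : ¬ Monochromatic f x.next.next (colorNbhd f v x) := fun h =>
    hunion x x <| hf.missesColor_union_of_monochromatic (hdeg x) (hdeg x.next)
      (hk.trans (hpair x)) h
  have hcross (x : Col) :
      ∃ u ∈ colorNbhd f v x, ∀ w ∈ colorNbhd f v x.next, f u w = x.next.next :=
    hf.exists_forall_cross_eq_next_next (by simpa using hnot x.next) (hunion x _)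
  have hmono (x : Col) : Monochromatic f x (colorNbhd f v x) := by
    obtain ⟨u, hu, huw⟩ := hcross x.next.next
    simpa using hf.monochromatic_of_forall_cross_eq_next_next hu huw
  obtain ⟨u, hu, huw⟩ := hcross Col.r
  have := hsmall _ _ (hf.missesColor_insert_erase_union hu huw (hmono Col.r))
  exact this.not_ge (card_insert_erase_union hu ▸ hpair Col.r)

end CyclicFree

end Neighborhoods

theorem CyclicFree.exists_missesColor_of_le_card {V : Type*} [Fintype V] {f : V → V → Col}
    (hf : CyclicFree f) {k : ℕ} (hk : 2 * k ≤ Fintype.card V + 1)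
    (hk4 : k = 4 → Fintype.card V ≠ 7) :
    ∃ (x : Col) (S : Finset V), MissesColor f x S ∧ k ≤ S.card := by
  classical
  by_contra! hsmall
  have hkpos : 0 < k := by simpa using hsmall Col.r ∅ (by simp [MissesColor])
  obtain ⟨v⟩ : Nonempty V := Fintype.card_pos_iff.1 (by omega)
  have hlt (x : Col) : (colorNbhd f v x).card + 1 < k := by
    rw [← Finset.card_insert_of_notMem (notMem_colorNbhd_self (f := f) (x := x))]
    exact hsmall x.next _ (by simpa using hf.missesColor_insert_colorNbhd)
  have hsum := sum_card_colorNbhd f v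
  have hpair (x : Col) : k ≤ (colorNbhd f v x).card + (colorNbhd f v x.next).card := by
    linarith [hsum x, hlt x.next.next]
  have hdeg (x : Col) : 2 ≤ (colorNbhd f v x).card := by
    linarith [hpair x, hlt x.next]
  have hk5 : 5 ≤ k := by
    have := hsum Col.r
    have := hlt Col.r
    have := hlt Col.r.next
    have := hlt Col.r.next.next
    omega
  obtain ⟨x, S, hS, hkS⟩ := hf.exists_missesColor_of_le_card_colorNbhd hk5 hdeg hpair
  exact (hsmall x S hS).not_ge hkS

section Extremal

variable {n : ℕ}

theorem triple_eq_triple_iff (x z₁ z₂ z₃ : Col) : ({z₁, z₂, z₃} : Multiset Col) = {x, x, x.next} ↔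
    z₁ = x ∧ z₂ = x ∧ z₃ = x.next ∨ z₂ = x ∧ z₃ = x ∧ z₁ = x.next ∨
      z₁ = x ∧ z₃ = x ∧ z₂ = x.next := by
  cases x <;> cases z₁ <;> cases z₂ <;> cases z₃ <;> decide

theorem mem_cyclicPatterns_iff {P : Multiset Col} :
    P ∈ ({Prrb, Pbby, Pyyr} : Set (Multiset Col)) ↔ ∃ x : Col, P = {x, x, x.next} := by
  constructor
  · rintro (rfl | rfl | rfl)
    exacts [⟨Col.r, rfl⟩, ⟨Col.b, rfl⟩, ⟨Col.y, rfl⟩]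
  · rintro ⟨_ | _ | _, rfl⟩
    exacts [.inl rfl, .inr (.inl rfl), .inr (.inr rfl)]

theorem avoids_iff_cyclicFree {c : Coloring n} :
    Avoids c {Prrb, Pbby, Pyyr} ↔ CyclicFree c.col := by
  constructor
  · intro h
    refine ⟨c.symm, fun {x u v w} huv hvw huw hx hx' hnext => ?_⟩
    exact h _ (mem_cyclicPatterns_iff.2 ⟨x, rfl⟩)
      ⟨u, v, w, huv, hvw, huw, (triple_eq_triple_iff ..).2 (.inl ⟨hx, hx', hnext⟩)⟩
  · rintro h P hP ⟨u, v, w, huv, hvw, huw, rfl⟩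
    obtain ⟨x, hx⟩ := mem_cyclicPatterns_iff.1 hP
    rcases (triple_eq_triple_iff ..).1 hx with ⟨h₁, h₂, h₃⟩ | ⟨h₁, h₂, h₃⟩ | ⟨h₁, h₂, h₃⟩
    · exact h.ne_next huv hvw huw h₁ h₂ h₃
    · exact h.ne_next hvw huw.symm huv.symm h₁ (c.symm u w ▸ h₂) (c.symm u v ▸ h₃)
    · exact h.ne_next huv.symm huw hvw (c.symm u v ▸ h₁) h₂ h₃

theorem MissesColor.card_le_h2 {c : Coloring n} {x : Col} {S : Finset (Fin n)}
    (hS : MissesColor c.col x S) : S.card ≤ h2 c := by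
  refine le_csSup ⟨n, ?_⟩ ⟨S, ⟨x, fun i hi j hj => hS hi hj⟩, rfl⟩
  rintro _ ⟨T, -, rfl⟩
  simpa using Finset.card_le_univ T

theorem h2_le {c : Coloring n} {m : ℕ}
    (h : ∀ (x : Col) (S : Finset (Fin n)), MissesColor c.col x S → S.card ≤ m) : h2 c ≤ m := by
  refine csSup_le ⟨0, ∅, ⟨Col.r, by simp⟩, by simp⟩ ?_
  rintro _ ⟨S, ⟨x, hS⟩, rfl⟩
  exact h x S fun i hi j hj => hS i hi j hj

theorem h2n_eq_of_cyclicFree {k : ℕ} (hk : 2 * k ≤ n + 1) (hk4 : k = 4 → n ≠ 7) {c : Coloring n}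
    (hc : CyclicFree c.col)
    (h : ∀ (x : Col) (S : Finset (Fin n)), MissesColor c.col x S → S.card ≤ k) :
    h2n n {Prrb, Pbby, Pyyr} = k := by
  have hmem : h2 c ∈ {m | ∃ c : Coloring n, Avoids c {Prrb, Pbby, Pyyr} ∧ h2 c = m} :=
    ⟨c, avoids_iff_cyclicFree.2 hc, rfl⟩
  refine le_antisymm ((Nat.sInf_le hmem).trans (h2_le h)) (le_csInf ⟨_, hmem⟩ ?_)
  rintro _ ⟨c', hc', rfl⟩
  obtain ⟨x, S, hS, hkS⟩ := (avoids_iff_cyclicFree.1 hc').exists_missesColor_of_le_card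
    (k := k) (by simpa using hk) (by simpa using hk4)
  exact hkS.trans hS.card_le_h2

/-- The extremal coloring for `n ≠ 7`: the even and the odd vertices span red cliques, and the edges
between them are blue except for the yellow matching `{0, 1}, {2, 3}, …`. -/
def matchingColoring (n : ℕ) : Coloring n where
  col i j :=
    if i.val % 2 = j.val % 2 then Col.r else if i.val / 2 = j.val / 2 then Col.y else Col.b
  symm i j := by simp only [eq_comm]

theorem matchingColoring.cyclicFree (n : ℕ) : CyclicFree (matchingColoring n).col := by
  refine ⟨(matchingColoring n).symm, fun {x u v w} huv hvw huw => ?_⟩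
  rw [Ne, Fin.ext_iff] at huv hvw huw
  simp only [matchingColoring]
  cases x <;> split_ifs <;> first | omega | decide

theorem card_le_of_injOn_div_two {S : Finset (Fin n)}
    (hS : Set.InjOn (fun i : Fin n => i.val / 2) S) : S.card ≤ (n + 1) / 2 := by
  rw [← Finset.card_range ((n + 1) / 2)]
  refine Finset.card_le_card_of_injOn _ (fun i _ => ?_) hS
  simp only [Finset.coe_range, Set.mem_Iio]
  omega

theorem matchingColoring.card_le_two_of_missesColor_r {S : Finset (Fin n)}
    (hS : MissesColor (matchingColoring n).col Col.r S) : S.card ≤ 2 := by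
  rw [← Finset.card_range 2]
  refine Finset.card_le_card_of_injOn (fun i => i.val % 2) (fun i _ => ?_) fun i hi j hj hij => ?_
  · simpa using Nat.mod_lt _ two_pos
  · by_contra hne
    exact hS hi hj hne (if_pos hij)

theorem matchingColoring.card_le_of_missesColor_y {S : Finset (Fin n)}
    (hS : MissesColor (matchingColoring n).col Col.y S) : S.card ≤ (n + 1) / 2 := by
  refine card_le_of_injOn_div_two fun i hi j hj (hij : i.val / 2 = j.val / 2) => ?_
  by_contra hne
  have hmod : i.val % 2 ≠ j.val % 2 := by omega
  exact hS hi hj hne (by simp [matchingColoring, hmod, hij])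

theorem matchingColoring.card_le_of_missesColor_b (hn : 3 ≤ n) {S : Finset (Fin n)}
    (hS : MissesColor (matchingColoring n).col Col.b S) : S.card ≤ (n + 1) / 2 := by
  have hdiv {i j : Fin n} (hi : i ∈ S) (hj : j ∈ S) (hmod : i.val % 2 ≠ j.val % 2) :
      i.val / 2 = j.val / 2 := by
    by_contra hne
    exact hS hi hj (by rintro rfl; exact hne rfl) (by simp [matchingColoring, hmod, hne])
  by_cases hparity : ∀ i ∈ S, ∀ j ∈ S, i.val % 2 = j.val % 2
  · refine card_le_of_injOn_div_two fun i hi j hj (hij : i.val / 2 = j.val / 2) => ?_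
    have := hparity i hi j hj
    omega
  · push Not at hparity
    obtain ⟨i, hi, j, hj, hij⟩ := hparity
    have hsub : S ⊆ {i, j} := by
      intro a ha
      have := hdiv hi hj hij
      have := hdiv ha hi
      have := hdiv ha hj
      simp only [Finset.mem_insert, Finset.mem_singleton, Fin.ext_iff]
      omega
    have := (Finset.card_le_card hsub).trans Finset.card_le_two
    omega

theorem matchingColoring.card_le_of_missesColor (hn : 3 ≤ n) (x : Col) (S : Finset (Fin n))
    (hS : MissesColor (matchingColoring n).col x S) : S.card ≤ (n + 1) / 2 := by
  cases x
  · exact (matchingColoring.card_le_two_of_missesColor_r hS).trans (by omega)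
  · exact matchingColoring.card_le_of_missesColor_b hn hS
  · exact matchingColoring.card_le_of_missesColor_y hS

/-- The extremal coloring for `n = 7`: the color of an edge depends on its length around the
heptagon `0, 1, …, 6`, with red, yellow and blue for the lengths `1`, `2` and `3`. -/
def heptagonColoring : Coloring 7 where
  col i j :=
    if i = j + 1 ∨ j = i + 1 then Col.r else if i = j + 2 ∨ j = i + 2 then Col.y else Col.b
  symm i j := by simp only [or_comm]

theorem heptagonColoring.cyclicFree : CyclicFree heptagonColoring.col where
  symm := heptagonColoring.symm
  ne_next {x} := by cases x <;> decide +kernel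

-- The edges of one color contain all edges of a fixed length `d`, so `S` is disjoint from `S + d`.
theorem heptagonColoring.card_le_three_of_missesColor (x : Col) (S : Finset (Fin 7))
    (hS : MissesColor heptagonColoring.col x S) : S.card ≤ 3 := by
  obtain ⟨d, hd⟩ : ∃ d : Fin 7, ∀ i, i + d ≠ i ∧ heptagonColoring.col (i + d) i = x := by
    cases x
    exacts [⟨1, by decide⟩, ⟨3, by decide⟩, ⟨2, by decide⟩]
  have hdisj : Disjoint S (S.map (addRightEmbedding d)) := by
    rw [Finset.disjoint_right]
    rintro _ ha hmem
    obtain ⟨i, hi, rfl⟩ := Finset.mem_map.1 ha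
    exact hS hmem hi (hd i).1 (hd i).2
  have hcard := Finset.card_le_univ (S.disjUnion _ hdisj)
  rw [Finset.card_disjUnion, Finset.card_map, Fintype.card_fin] at hcard
  omega

end Extremal

theorem stmt9 :
    (∀ n : ℕ, 3 ≤ n → n ≠ 7 → h2n n {Prrb, Pbby, Pyyr} = (n + 1) / 2) ∧
    h2n 7 {Prrb, Pbby, Pyyr} = 3 := by
  constructor
  · intro n hn hn7
    exact h2n_eq_of_cyclicFree (by omega) (fun _ => hn7) (matchingColoring.cyclicFree n)
      (matchingColoring.card_le_of_missesColor hn)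
  · exact h2n_eq_of_cyclicFree (by omega) (by omega) heptagonColoring.cyclicFree
      heptagonColoring.card_le_three_of_missesColor
end
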